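/- arXiv:1109.2251 — 5 statements merged into one kernel-verified Lean document; each statement's English description precedes it below -/
import Mathlib

section
/- Let K be a cubic number field (a number field of degree 3 over ℚ) whose discriminant d is a fundamental discriminant, and let g = gcd(3, d). Then for every algebraic integer x of K with Tr_{K/ℚ}(x) = 0, the integer 2·g divides Tr_{K/ℚ}(x²). -/
/-- An integer `d` is a fundamental discriminant if `d ≠ 1` and either
`d ≡ 1 (mod 4)` and `d` is squarefree, or `d ≡ 0 (mod 4)`, `d/4` is squarefree,
and `d/4 ≡ 2` or `3 (mod 4)`. -/
def IsFundamentalDiscriminant (d : ℤ) : Prop :=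
  d ≠ 1 ∧
    ((d % 4 = 1 ∧ Squarefree d) ∨
      (d % 4 = 0 ∧ Squarefree (d / 4) ∧ (d / 4 % 4 = 2 ∨ d / 4 % 4 = 3)))

/-- For a cubic field `K` of fundamental discriminant `d` and `g = gcd(3, d)`,
`2·g` divides the trace of `x²` for every trace-zero algebraic integer `x` of `K`. -/
theorem two_gcd_dvd_trace_sq (K : Type*) [Field K] [NumberField K]
    (hdeg : Module.finrank ℚ K = 3)
    (hfund : IsFundamentalDiscriminant (NumberField.discr K))
    (x : NumberField.RingOfIntegers K)
    (hx : Algebra.trace ℚ K (x : K) = 0) :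
    ∃ m : ℤ,
      Algebra.trace ℚ K ((x : K) ^ 2) =
        ((2 * (Int.gcd 3 (NumberField.discr K) : ℤ) * m : ℤ) : ℚ) := by
  classical
  have hrank : Module.finrank ℤ (NumberField.RingOfIntegers K) = 3 := by
    rw [NumberField.RingOfIntegers.rank, hdeg]
  let b : Module.Basis (Fin 3) ℤ (NumberField.RingOfIntegers K) :=
    Module.finBasisOfFinrankEq ℤ _ hrank
  have hdisc : NumberField.discr K = Algebra.discr ℤ b := (NumberField.discr_eq_discr K b).symm
  have htr : ∀ y : NumberField.RingOfIntegers K,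
      ((Algebra.trace ℤ _ y : ℤ) : ℚ) = Algebra.trace ℚ K (y : K) :=
    fun y => Algebra.coe_trace_int y
  have h0 : Algebra.trace ℤ (NumberField.RingOfIntegers K) x = 0 := by
    have := htr x
    rw [hx] at this
    exact_mod_cast this
  have h1 : Algebra.trace ℤ (NumberField.RingOfIntegers K) 1 = 3 := by
    have := Algebra.trace_algebraMap_of_basis b (1 : ℤ)
    simpa using this
  have h2 : (2 : ℤ) ∣ Algebra.trace ℤ (NumberField.RingOfIntegers K) (x ^ 2) := by
    rw [Algebra.trace_eq_matrix_trace b] at h0 ⊢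
    rw [map_pow]
    generalize Algebra.leftMulMatrix b x = M at h0 ⊢
    simp only [Matrix.trace_fin_three, pow_two, Matrix.mul_apply, Fin.sum_univ_three] at h0 ⊢
    have h22 : M 2 2 = - M 0 0 - M 1 1 := by linarith
    rw [h22]
    exact ⟨M 0 0 ^ 2 + M 1 1 ^ 2 + M 0 0 * M 1 1 + M 0 1 * M 1 0 + M 0 2 * M 2 0 + M 1 2 * M 2 1,
      by ring⟩
  have h3 : (3 : ℤ) ∣ NumberField.discr K →
      (3 : ℤ) ∣ Algebra.trace ℤ (NumberField.RingOfIntegers K) (x ^ 2) := by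
    intro h
    let v : Fin 3 → NumberField.RingOfIntegers K := ![1, x, x ^ 2]
    have hv : Algebra.discr ℤ v = (b.toMatrix v).det ^ 2 * Algebra.discr ℤ b := by
      rw [← Algebra.discr_of_matrix_vecMul, Module.Basis.toMatrix_map_vecMul]
    have hdv : (3 : ℤ) ∣ Algebra.discr ℤ v := by
      rw [hv, ← hdisc]
      exact h.mul_left _
    rw [Algebra.discr_def, Matrix.det_fin_three] at hdv
    simp only [Algebra.traceMatrix_apply, Algebra.traceForm_apply, v, Matrix.cons_val_zero,
      Matrix.cons_val_one, Matrix.cons_val, one_mul, mul_one, one_pow, h0, h1, ← pow_two] at hdv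
    rw [← Int.prime_three.dvd_pow_iff_dvd (n := 3) (by norm_num)]
    obtain ⟨c, hc⟩ := hdv
    generalize Algebra.trace ℤ (NumberField.RingOfIntegers K) (x ^ 2) = s at *
    rw [show x ^ 2 * x = x * x ^ 2 by ring] at hc
    generalize Algebra.trace ℤ (NumberField.RingOfIntegers K) (x * x ^ 2) = t at *
    generalize Algebra.trace ℤ (NumberField.RingOfIntegers K) ((x ^ 2) ^ 2) = u at *
    exact ⟨s * u - t * t - c, by linarith⟩
  have h4 : (2 * (Int.gcd 3 (NumberField.discr K) : ℤ)) ∣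
      Algebra.trace ℤ (NumberField.RingOfIntegers K) (x ^ 2) := by
    by_cases h : (3 : ℤ) ∣ NumberField.discr K
    · have hg : Int.gcd 3 (NumberField.discr K) = 3 := by
        exact_mod_cast (Int.gcd_eq_left_iff_dvd (by norm_num)).2 h
      rw [hg]
      have := h3 h
      push_cast
      omega
    · have hg : Int.gcd 3 (NumberField.discr K) = 1 :=
        Int.isCoprime_iff_gcd_eq_one.1 ((Int.prime_three.coprime_iff_not_dvd).2 h)
      rw [hg]
      simpa using h2
  obtain ⟨m, hm⟩ := h4
  refine ⟨m, ?_⟩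
  rw [← hm, htr]
  simp
end

section
/- Let K be a cubic number field (a number field of degree 3 over ℚ) whose discriminant d is a fundamental discriminant, and let g = gcd(3, d). Then for all algebraic integers x, y of K with Tr_{K/ℚ}(x) = 0 and Tr_{K/ℚ}(y) = 0, the integer g divides Tr_{K/ℚ}(x·y). -/
theorem three_dvd_trace_sq (K : Type*) [Field K] [NumberField K]
    (hdeg : Module.finrank ℚ K = 3) (hd : (3 : ℤ) ∣ NumberField.discr K)
    (x : NumberField.RingOfIntegers K)
    (hx : Algebra.trace ℤ (NumberField.RingOfIntegers K) x = 0) :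
    (3 : ℤ) ∣ Algebra.trace ℤ (NumberField.RingOfIntegers K) (x * x) := by
  have hr : Module.finrank ℤ (NumberField.RingOfIntegers K) = 3 := by
    rw [NumberField.RingOfIntegers.rank, hdeg]
  let b := Module.finBasisOfFinrankEq ℤ (NumberField.RingOfIntegers K) hr
  rw [← NumberField.discr_eq_discr K b] at hd
  let v : Fin 3 → NumberField.RingOfIntegers K := ![1, x, x * x]
  have hv : v = ((b.toMatrix v).transpose.map
      (algebraMap ℤ (NumberField.RingOfIntegers K))).mulVec b := by
    funext i
    have := b.sum_toMatrix_smul_self v i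
    rw [← this]
    simp [Matrix.mulVec, dotProduct, Algebra.smul_def]
  have h1 := Algebra.discr_of_matrix_mulVec (A := ℤ) (⇑b) (b.toMatrix v).transpose
  rw [← hv] at h1
  have h2 : (3 : ℤ) ∣ Algebra.discr ℤ v := by
    rw [h1]; exact Dvd.dvd.mul_left hd _
  have h3 : Algebra.trace ℤ (NumberField.RingOfIntegers K) 1 = 3 := by
    have := Algebra.trace_algebraMap_of_basis b (1 : ℤ)
    simpa using this
  rw [Algebra.discr_def, Matrix.det_fin_three] at h2
  simp only [Algebra.traceMatrix_apply, Algebra.traceForm_apply, v, Matrix.cons_val, one_mul,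
    mul_one, hx, h3] at h2
  set t := Algebra.trace ℤ (NumberField.RingOfIntegers K) (x * x)
  set s := Algebra.trace ℤ (NumberField.RingOfIntegers K) (x * (x * x))
  set u := Algebra.trace ℤ (NumberField.RingOfIntegers K) (x * x * (x * x))
  have hs : Algebra.trace ℤ (NumberField.RingOfIntegers K) (x * x * x) = s := by
    rw [mul_comm (x * x) x]
  rw [hs] at h2
  have h4 : (3 : ℤ) ∣ t ^ 3 := by
    obtain ⟨c, hc⟩ := h2
    exact ⟨t * u - s ^ 2 - c, by linear_combination -hc⟩
  exact Int.prime_three.dvd_of_dvd_pow h4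

/-- For a cubic field `K` of fundamental discriminant `d` and `g = gcd(3, d)`,
`g` divides the trace of `x·y` for all trace-zero algebraic integers `x, y` of `K`. -/
theorem gcd_dvd_trace_mul (K : Type*) [Field K] [NumberField K]
    (hdeg : Module.finrank ℚ K = 3)
    (hfund : IsFundamentalDiscriminant (NumberField.discr K))
    (x y : NumberField.RingOfIntegers K)
    (hx : Algebra.trace ℚ K (x : K) = 0)
    (hy : Algebra.trace ℚ K (y : K) = 0) :
    ∃ m : ℤ,
      Algebra.trace ℚ K ((x : K) * (y : K)) =
        (((Int.gcd 3 (NumberField.discr K) : ℤ) * m : ℤ) : ℚ) := by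
  have key : ∀ z : NumberField.RingOfIntegers K, Algebra.trace ℚ K (z : K) =
      ((Algebra.trace ℤ (NumberField.RingOfIntegers K) z : ℤ) : ℚ) := fun z =>
    (Algebra.coe_trace_int z).symm
  rw [key] at hx hy
  have hx' : Algebra.trace ℤ (NumberField.RingOfIntegers K) x = 0 := by exact_mod_cast hx
  have hy' : Algebra.trace ℤ (NumberField.RingOfIntegers K) y = 0 := by exact_mod_cast hy
  rw [← map_mul, key]
  suffices h : (Int.gcd 3 (NumberField.discr K) : ℤ) ∣
      Algebra.trace ℤ (NumberField.RingOfIntegers K) (x * y) by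
    obtain ⟨m, hm⟩ := h
    exact ⟨m, by rw [hm]⟩
  by_cases hd : (3 : ℤ) ∣ NumberField.discr K
  · refine (Int.gcd_dvd_left ..).trans ?_
    have a := three_dvd_trace_sq K hdeg hd x hx'
    have b := three_dvd_trace_sq K hdeg hd y hy'
    have c := three_dvd_trace_sq K hdeg hd (x + y) (by rw [map_add, hx', hy', add_zero])
    have e : (x + y) * (x + y) = x * x + y * y + (x * y + x * y) := by ring
    rw [e, map_add, map_add, map_add] at c
    omega
  · have : IsCoprime (3 : ℤ) (NumberField.discr K) :=
      (Int.prime_three.coprime_iff_not_dvd).2 hd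
    rw [Int.isCoprime_iff_gcd_eq_one.1 this]
    simp
end

section
/- Let K be a cubic number field (a number field of degree 3 over ℚ) whose discriminant d is a fundamental discriminant, and let e₁, e₂ be a ℤ-basis of the rank-2 free ℤ-module O_K^0 of trace-zero algebraic integers of K. Then Tr_{K/ℚ}(e₁·e₂)² − Tr_{K/ℚ}(e₁²)·Tr_{K/ℚ}(e₂²) = −3d. -/
open NumberField in
theorem discr_dvd_aux (K : Type*) [Field K] [NumberField K]
    (hdeg : Module.finrank ℚ K = 3)
    (h : ∀ x : 𝓞 K, (3 : ℤ) ∣ Algebra.trace ℤ (𝓞 K) x) : (27 : ℤ) ∣ NumberField.discr K := by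
  classical
  choose f hf using h
  let b := RingOfIntegers.basis K
  rw [← NumberField.discr_eq_discr K b, Algebra.discr_def]
  have hM : Algebra.traceMatrix ℤ b = (3 : ℤ) • Matrix.of (fun i j => f (b i * b j)) := by
    ext i j
    simp [Algebra.traceMatrix_apply, Algebra.traceForm_apply, hf (b i * b j)]
  have hc : Fintype.card (Module.Free.ChooseBasisIndex ℤ (𝓞 K)) = 3 := by
    rw [← Module.finrank_eq_card_chooseBasisIndex, RingOfIntegers.rank, hdeg]
  rw [hM, Matrix.det_smul, hc]
  exact Dvd.dvd.mul_right (by norm_num) _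

theorem fund_not_dvd (d : ℤ) (h : IsFundamentalDiscriminant d) : ¬ (27 : ℤ) ∣ d := by
  intro h27
  have key : ∀ e : ℤ, Squarefree e → (9 : ℤ) ∣ e → False := by
    intro e he h9
    have := he 3 (by simpa using h9)
    rw [Int.isUnit_iff] at this
    omega
  rcases h with ⟨-, ⟨-, hs⟩ | ⟨h4, hs, -⟩⟩
  · exact key d hs (by omega)
  · exact key _ hs (by omega)

open NumberField in
/-- If `e₁, e₂` is a ℤ-basis of the module of trace-zero algebraic integers of a cubic
field `K` of fundamental discriminant `d`, then
`Tr(e₁e₂)² − Tr(e₁²)·Tr(e₂²) = −3d`. -/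
theorem trace_form_aux (K : Type*) [Field K] [NumberField K]
    (hdeg : Module.finrank ℚ K = 3)
    (hfund : IsFundamentalDiscriminant (NumberField.discr K))
    (e₁ e₂ : 𝓞 K)
    (he₁ : Algebra.trace ℤ (𝓞 K) e₁ = 0)
    (he₂ : Algebra.trace ℤ (𝓞 K) e₂ = 0)
    (hbasis : ∀ x : 𝓞 K, Algebra.trace ℤ (𝓞 K) x = 0 →
      ∃! mn : ℤ × ℤ, x = mn.1 • e₁ + mn.2 • e₂) :
    (Algebra.trace ℤ (𝓞 K) (e₁ * e₂)) ^ 2 -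
        Algebra.trace ℤ (𝓞 K) (e₁ ^ 2) * Algebra.trace ℤ (𝓞 K) (e₂ ^ 2) =
      -3 * NumberField.discr K := by
  classical
  have h1 : Algebra.trace ℤ (𝓞 K) 1 = 3 := by
    have := Algebra.trace_algebraMap (S := 𝓞 K) (1 : ℤ)
    rw [map_one, RingOfIntegers.rank, hdeg] at this
    simpa using this
  obtain ⟨θ, hθ⟩ : ∃ θ : 𝓞 K, Algebra.trace ℤ (𝓞 K) θ = 1 := by
    have h : ¬ ∀ x : 𝓞 K, (3 : ℤ) ∣ Algebra.trace ℤ (𝓞 K) x :=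
      fun h => fund_not_dvd _ hfund (discr_dvd_aux K hdeg h)
    push Not at h
    obtain ⟨x, hx⟩ := h
    set t := Algebra.trace ℤ (𝓞 K) x with ht
    have : t % 3 = 1 ∨ t % 3 = 2 := by omega
    rcases this with h | h
    · refine ⟨x - (t / 3) • 1, ?_⟩
      rw [map_sub, map_smul, h1, ← ht, smul_eq_mul]; omega
    · refine ⟨(t / 3 + 1) • 1 - x, ?_⟩
      rw [map_sub, map_smul, h1, ← ht, smul_eq_mul]; omega
  have hli : LinearIndependent ℤ ![θ, e₁, e₂] := by
    rw [Fintype.linearIndependent_iff]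
    intro g hg
    simp only [Fin.sum_univ_three, Matrix.cons_val] at hg
    have h0 : g 0 = 0 := by
      have := congrArg (Algebra.trace ℤ (𝓞 K)) hg
      simpa only [map_add, map_smul, hθ, he₁, he₂, map_zero, smul_eq_mul, mul_one, mul_zero,
        add_zero] using this
    rw [h0, zero_smul, zero_add] at hg
    have := (hbasis 0 (map_zero _)).unique (y₁ := (g 1, g 2)) (y₂ := (0, 0)) hg.symm (by simp)
    simp only [Prod.mk.injEq] at this
    intro i
    fin_cases i
    · exact h0
    · exact this.1
    · exact this.2
  have hex : ∀ x : 𝓞 K, ∃ m n : ℤ, x = Algebra.trace ℤ (𝓞 K) x • θ + m • e₁ + n • e₂ := by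
    intro x
    obtain ⟨⟨m, n⟩, h, -⟩ := hbasis (x - Algebra.trace ℤ (𝓞 K) x • θ)
      (by rw [map_sub, map_smul, hθ, smul_eq_mul, mul_one, sub_self])
    refine ⟨m, n, ?_⟩
    rw [add_assoc]
    exact eq_add_of_sub_eq' h
  have hsp : ⊤ ≤ Submodule.span ℤ (Set.range ![θ, e₁, e₂]) := by
    intro x _
    obtain ⟨m, n, h⟩ := hex x
    rw [h]
    refine add_mem (add_mem ?_ ?_) ?_ <;> refine Submodule.smul_mem _ _ (Submodule.subset_span ?_)
    · exact ⟨0, rfl⟩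
    · exact ⟨1, rfl⟩
    · exact ⟨2, rfl⟩
  have hd : NumberField.discr K = Algebra.discr ℤ ![θ, e₁, e₂] := by
    rw [← NumberField.discr_eq_discr K (Module.Basis.mk hli hsp), Module.Basis.coe_mk]
  rw [Algebra.discr_def, Matrix.det_fin_three] at hd
  simp only [Algebra.traceMatrix_apply, Algebra.traceForm_apply, Matrix.cons_val] at hd
  obtain ⟨m, n, h⟩ := hex 1
  rw [h1] at h
  have key : ∀ y : 𝓞 K, Algebra.trace ℤ (𝓞 K) y = 3 * Algebra.trace ℤ (𝓞 K) (θ * y)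
      + m * Algebra.trace ℤ (𝓞 K) (e₁ * y) + n * Algebra.trace ℤ (𝓞 K) (e₂ * y) := by
    intro y
    have := congrArg (fun z => Algebra.trace ℤ (𝓞 K) (z * y)) h
    simpa only [one_mul, add_mul, smul_mul_assoc, map_add, map_smul, smul_eq_mul] using this
  have k0 := key θ
  have k1 := key e₁
  have k2 := key e₂
  rw [hθ] at k0
  rw [he₁] at k1
  rw [he₂] at k2
  rw [mul_comm e₁ θ, mul_comm e₂ θ, mul_comm e₂ e₁] at *
  rw [hd, sq e₁, sq e₂]
  generalize Algebra.trace ℤ (𝓞 K) (θ * θ) = A at *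
  generalize Algebra.trace ℤ (𝓞 K) (θ * e₁) = B at *
  generalize Algebra.trace ℤ (𝓞 K) (θ * e₂) = C at *
  generalize Algebra.trace ℤ (𝓞 K) (e₁ * e₁) = P at *
  generalize Algebra.trace ℤ (𝓞 K) (e₁ * e₂) = Q at *
  generalize Algebra.trace ℤ (𝓞 K) (e₂ * e₂) = R at *
  linear_combination (Q^2 - P*R) * k0 + (B*R-C*Q) * k1 + (C*P-B*Q)*k2

/-- If `e₁, e₂` is a ℤ-basis of the module of trace-zero algebraic integers of a cubic
field `K` of fundamental discriminant `d`, then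
`Tr(e₁e₂)² − Tr(e₁²)·Tr(e₂²) = −3d`. -/
theorem trace_form_det_eq_neg_three_discr (K : Type*) [Field K] [NumberField K]
    (hdeg : Module.finrank ℚ K = 3)
    (hfund : IsFundamentalDiscriminant (NumberField.discr K))
    (e₁ e₂ : NumberField.RingOfIntegers K)
    (he₁ : Algebra.trace ℚ K (e₁ : K) = 0)
    (he₂ : Algebra.trace ℚ K (e₂ : K) = 0)
    (hbasis : ∀ x : NumberField.RingOfIntegers K, Algebra.trace ℚ K (x : K) = 0 →
      ∃! mn : ℤ × ℤ, x = mn.1 • e₁ + mn.2 • e₂) :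
    (Algebra.trace ℚ K ((e₁ : K) * (e₂ : K))) ^ 2 -
        Algebra.trace ℚ K ((e₁ : K) ^ 2) * Algebra.trace ℚ K ((e₂ : K) ^ 2) =
      ((-3 * NumberField.discr K : ℤ) : ℚ) := by
  have ht : ∀ x : NumberField.RingOfIntegers K, Algebra.trace ℚ K (x : K) =
      ((Algebra.trace ℤ (NumberField.RingOfIntegers K) x : ℤ) : ℚ) := fun x =>
    (Algebra.coe_trace_int x).symm
  have h := trace_form_aux K hdeg hfund e₁ e₂
    (by rw [ht] at he₁; exact_mod_cast he₁) (by rw [ht] at he₂; exact_mod_cast he₂)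
    (fun x hx => hbasis x (by rw [ht, hx, Int.cast_zero]))
  have a : Algebra.trace ℚ K ((e₁ : K) * (e₂ : K)) = _ := ht (e₁ * e₂)
  have b : Algebra.trace ℚ K ((e₁ : K) ^ 2) = _ := ht (e₁ ^ 2)
  have c : Algebra.trace ℚ K ((e₂ : K) ^ 2) = _ := ht (e₂ ^ 2)
  rw [← h, a, b, c]
  push_cast
  rfl
end

section
/- Let K be a cubic number field (a number field of degree 3 over ℚ) whose discriminant d is a fundamental discriminant, let g = gcd(3, d), and let e₁, e₂ be a ℤ-basis of the rank-2 free ℤ-module O_K^0 of trace-zero algebraic integers of K. Then there exist integers a, b, c with 2g·a = Tr_{K/ℚ}(e₁²), g·b = Tr_{K/ℚ}(e₁·e₂), 2g·c = Tr_{K/ℚ}(e₂²), and gcd(a, b, c) = 1; that is, the binary quadratic form t_K = Tr_{K/ℚ}(x²)/(2g) restricted to O_K^0 is an integral primitive binary quadratic form. -/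
theorem tf_arith_prime (d a b c : ℤ) (h : IsFundamentalDiscriminant d)
    (hD : (4 * a * c - b ^ 2 = 3 * d ∧ ¬ (3 : ℤ) ∣ d) ∨ 3 * (4 * a * c - b ^ 2) = d)
    (p : ℕ) (hp : p.Prime) (ha : (p : ℤ) ∣ a) (hb : (p : ℤ) ∣ b) (hc : (p : ℤ) ∣ c) : False := by
  have hpi : Prime (p : ℤ) := Nat.prime_iff_prime_int.mp hp
  obtain ⟨a, rfl⟩ := ha
  obtain ⟨b, rfl⟩ := hb
  obtain ⟨c, rfl⟩ := hc
  have hsq : (p : ℤ) * p ∣ d := by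
    rcases hD with ⟨h1, h2⟩ | h1
    · have h3 : (p : ℤ) * p ∣ 3 * d := ⟨4 * a * c - b ^ 2, by rw [← h1]; ring⟩
      have hne : p ≠ 3 := by
        rintro rfl
        apply h2
        obtain ⟨k, hk⟩ := h3
        push_cast at hk
        exact ⟨k, by linarith⟩
      have hcop : IsCoprime (p : ℤ) 3 := by
        have := (Nat.coprime_primes hp Nat.prime_three).mpr hne
        exact_mod_cast Nat.isCoprime_iff_coprime.mpr this
      exact (IsCoprime.mul_left hcop hcop).dvd_of_dvd_mul_left h3
    · exact ⟨3 * (4 * a * c - b ^ 2), by rw [← h1]; ring⟩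
  rcases h.2 with ⟨-, h2⟩ | ⟨h0, h2, h3⟩
  · exact hpi.not_unit (h2 _ hsq)
  · obtain ⟨f, rfl⟩ : (4 : ℤ) ∣ d := Int.dvd_of_emod_eq_zero h0
    rw [Int.mul_ediv_cancel_left _ (by norm_num)] at h2 h3
    by_cases hp2 : p = 2
    · subst hp2
      have hb4 : b ^ 2 % 4 = 0 ∨ b ^ 2 % 4 = 1 := by
        rcases Int.even_or_odd' b with ⟨k, rfl | rfl⟩
        · left; ring_nf; omega
        · right; ring_nf; omega
      push_cast at hD
      rcases hD with ⟨h1, -⟩ | h1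
      · have : 4 * (a * c) - b ^ 2 = 3 * f := by linarith
        omega
      · have : 3 * (4 * (a * c) - b ^ 2) = f := by linarith
        omega
    · have hcop : IsCoprime (p : ℤ) 4 := by
        have := (Nat.coprime_primes hp Nat.prime_two).mpr hp2
        have h4 : Nat.Coprime p (2 ^ 2) := Nat.Coprime.pow_right 2 this
        exact_mod_cast Nat.isCoprime_iff_coprime.mpr h4
      exact hpi.not_unit (h2 _ ((IsCoprime.mul_left hcop hcop).dvd_of_dvd_mul_left hsq))

theorem tf_arith (d a b c : ℤ) (h : IsFundamentalDiscriminant d)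
    (hD : (4 * a * c - b ^ 2 = 3 * d ∧ ¬ (3 : ℤ) ∣ d) ∨ 3 * (4 * a * c - b ^ 2) = d) :
    Int.gcd a (Int.gcd b c) = 1 := by
  by_contra hne
  obtain ⟨p, hp, hdv⟩ := Nat.exists_prime_and_dvd hne
  have h1 : (p : ℤ) ∣ (Int.gcd a (Int.gcd b c) : ℤ) := by exact_mod_cast hdv
  have h2 := h1.trans (Int.gcd_dvd_right ..)
  exact tf_arith_prime d a b c h hD p hp (h1.trans (Int.gcd_dvd_left ..))
    (h2.trans (Int.gcd_dvd_left ..)) (h2.trans (Int.gcd_dvd_right ..))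

theorem tf_not_nine (d : ℤ) (h : IsFundamentalDiscriminant d) : ¬ (9 : ℤ) ∣ d := by
  intro h9
  have h3 : ¬ IsUnit (3 : ℤ) := by decide
  rcases h.2 with ⟨-, h2⟩ | ⟨h0, h2, -⟩
  · exact h3 (h2 3 (by simpa using h9))
  · exact h3 (h2 3 (by omega))

/-- The purely integral part of the argument. -/
theorem tf_core (d A B C p q r m n : ℤ) (h : IsFundamentalDiscriminant d)
    (hd : d = 2 * A * (2 * C * r - q * q) - B * (B * r - q * p) + p * (B * q - 2 * C * p))
    (h1 : 2 * A * m + B * n + 3 * p = 0) (h2 : B * m + 2 * C * n + 3 * q = 0)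
    (h3 : p * m + q * n + 3 * r = 1) :
    ∃ a b c : ℤ, (Int.gcd 3 d : ℤ) * a = A ∧ (Int.gcd 3 d : ℤ) * b = B ∧
      (Int.gcd 3 d : ℤ) * c = C ∧ Int.gcd a (Int.gcd b c) = 1 := by
  have e1 : 4 * A * C - B ^ 2 = 3 * d := by
    subst hd
    linear_combination (-(4 * A * C - B ^ 2)) * h3 + (2 * C * p - B * q) * h1 +
      (2 * A * q - B * p) * h2
  have e2 : B * q - 2 * C * p = m * d := by
    subst hd
    linear_combination (-(B * q - 2 * C * p)) * h3 + (q ^ 2 - 2 * C * r) * h1 + (B * r - p * q) * h2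
  have e3 : B * p - 2 * A * q = n * d := by
    subst hd
    linear_combination (-(B * p - 2 * A * q)) * h3 + (B * r - p * q) * h1 + (p ^ 2 - 2 * A * r) * h2
  by_cases h3d : (3 : ℤ) ∣ d
  · have hg : Int.gcd 3 d = 3 := by
      have := Int.gcd_eq_left (a := 3) (b := d) (by norm_num) h3d
      exact_mod_cast this
    obtain ⟨k, rfl⟩ := h3d
    have hA : (3 : ℤ) ∣ 2 * A := ⟨2 * A * r - p * p - n * n * k, by
      linear_combination (-(2 * A)) * h3 + p * h1 - n * e3⟩
    have hC : (3 : ℤ) ∣ 2 * C := ⟨2 * C * r - q * q - m * m * k, by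
      linear_combination (-(2 * C)) * h3 + q * h2 - m * e2⟩
    have hB : (3 : ℤ) ∣ B := ⟨B * r - p * q + n * m * k, by
      linear_combination (-B) * h3 + p * h2 + n * e2⟩
    obtain ⟨a, rfl⟩ : (3 : ℤ) ∣ A := by omega
    obtain ⟨c, rfl⟩ : (3 : ℤ) ∣ C := by omega
    obtain ⟨b, rfl⟩ := hB
    rw [hg]
    refine ⟨a, b, c, by norm_num, by norm_num, by norm_num, tf_arith _ a b c h (Or.inr ?_)⟩
    linarith
  · have hg : Int.gcd 3 d = 1 := by
      have := (Int.isCoprime_iff_gcd_eq_one (m := 3) (n := d)).mp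
        ((Int.prime_three.coprime_iff_not_dvd).mpr h3d)
      exact this
    rw [hg]
    exact ⟨A, B, C, by norm_num, by norm_num, by norm_num, tf_arith d A B C h (Or.inl ⟨e1, h3d⟩)⟩

open NumberField

theorem tf_even {R : Type*} [CommRing R] (b : Module.Basis (Fin 3) ℤ R) (x : R)
    (hx : Algebra.trace ℤ R x = 0) : ∃ A : ℤ, Algebra.trace ℤ R (x * x) = 2 * A := by
  rw [Algebra.trace_eq_matrix_trace b, Matrix.trace_fin_three] at hx
  rw [Algebra.trace_eq_matrix_trace b, map_mul, Matrix.trace_fin_three]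
  generalize Algebra.leftMulMatrix b x = M at *
  simp only [Matrix.mul_apply, Fin.sum_univ_three]
  refine ⟨-(M 0 0 * M 1 1 + M 0 0 * M 2 2 + M 1 1 * M 2 2 - M 0 1 * M 1 0 - M 0 2 * M 2 0
    - M 1 2 * M 2 1), ?_⟩
  linear_combination (M 0 0 + M 1 1 + M 2 2) * hx

/-- `e₁, e₂, u` is a basis. -/
theorem tf_basis {R : Type*} [CommRing R] (e₁ e₂ u : R) (t : ℤ) (ht : t ≠ 0)
    (he₁ : Algebra.trace ℤ R e₁ = 0) (he₂ : Algebra.trace ℤ R e₂ = 0)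
    (hu : Algebra.trace ℤ R u = t) (hdv : ∀ x : R, t ∣ Algebra.trace ℤ R x)
    (hbasis : ∀ x : R, Algebra.trace ℤ R x = 0 → ∃! mn : ℤ × ℤ, x = mn.1 • e₁ + mn.2 • e₂) :
    ∃ b : Module.Basis (Fin 3) ℤ R, (b : Fin 3 → R) = ![e₁, e₂, u] := by
  have hli : LinearIndependent ℤ ![e₁, e₂, u] := by
    rw [Fintype.linearIndependent_iff]
    intro g hg
    simp only [Fin.sum_univ_three, Matrix.cons_val_zero, Matrix.cons_val_one,
      Matrix.cons_val] at hg
    have h2 : g 2 = 0 := by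
      have := congrArg (Algebra.trace ℤ R) hg
      simp only [map_add, map_smul, he₁, he₂, hu, map_zero, smul_eq_mul, mul_zero, zero_add] at this
      exact (mul_eq_zero.mp this).resolve_right ht
    rw [h2, zero_smul, add_zero] at hg
    obtain ⟨mn, -, hun⟩ := hbasis 0 (map_zero _)
    have := (hun (g 0, g 1) hg.symm).trans (hun (0, 0) (by simp)).symm
    simp only [Prod.mk.injEq] at this
    intro i
    fin_cases i
    · exact this.1
    · exact this.2
    · exact h2
  have hsp : ⊤ ≤ Submodule.span ℤ (Set.range ![e₁, e₂, u]) := by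
    intro x _
    obtain ⟨k, hk⟩ := hdv x
    obtain ⟨mn, hmn, -⟩ := hbasis (x - k • u) (by
      rw [map_sub, map_smul, hu, hk, smul_eq_mul]; ring)
    have hxx : x = mn.1 • e₁ + mn.2 • e₂ + k • u := by rw [← hmn]; abel
    rw [hxx]
    refine add_mem (add_mem ?_ ?_) ?_ <;> refine Submodule.smul_mem _ _ (Submodule.subset_span ?_)
    · exact ⟨0, rfl⟩
    · exact ⟨1, rfl⟩
    · exact ⟨2, rfl⟩
  exact ⟨Module.Basis.mk hli hsp, Module.Basis.coe_mk hli hsp⟩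

theorem tf_discr (K : Type*) [Field K] [NumberField K] (e₁ e₂ u : 𝓞 K)
    (b : Module.Basis (Fin 3) ℤ (𝓞 K)) (hb : (b : Fin 3 → 𝓞 K) = ![e₁, e₂, u])
    (T : 𝓞 K → ℤ) (hT : T = Algebra.trace ℤ (𝓞 K)) :
    discr K = T (e₁ * e₁) * (T (e₂ * e₂) * T (u * u) - T (e₂ * u) * T (e₂ * u))
      - T (e₁ * e₂) * (T (e₁ * e₂) * T (u * u) - T (e₂ * u) * T (e₁ * u))
      + T (e₁ * u) * (T (e₁ * e₂) * T (e₂ * u) - T (e₂ * e₂) * T (e₁ * u)) := by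
  rw [← discr_eq_discr K b, hb, Algebra.discr_def, Matrix.det_fin_three, hT]
  simp only [Algebra.traceMatrix_apply, Algebra.traceForm_apply, Matrix.cons_val_zero,
    Matrix.cons_val_one, Matrix.cons_val]
  rw [mul_comm e₂ e₁, mul_comm u e₁, mul_comm u e₂]
  ring

/-- If `e₁, e₂` is a ℤ-basis of the module of trace-zero algebraic integers of a cubic
field `K` of fundamental discriminant `d`, and `g = gcd(3, d)`, then the form
`t_K = Tr(x²)/(2g)` on `O_K^0` is an integral primitive binary quadratic form: there are
integers `a, b, c` with `2g·a = Tr(e₁²)`, `g·b = Tr(e₁e₂)`, `2g·c = Tr(e₂²)` and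
`gcd(a, b, c) = 1`. -/
theorem traceForm_primitive (K : Type*) [Field K] [NumberField K]
    (hdeg : Module.finrank ℚ K = 3)
    (hfund : IsFundamentalDiscriminant (NumberField.discr K))
    (e₁ e₂ : NumberField.RingOfIntegers K)
    (he₁ : Algebra.trace ℚ K (e₁ : K) = 0)
    (he₂ : Algebra.trace ℚ K (e₂ : K) = 0)
    (hbasis : ∀ x : NumberField.RingOfIntegers K, Algebra.trace ℚ K (x : K) = 0 →
      ∃! mn : ℤ × ℤ, x = mn.1 • e₁ + mn.2 • e₂) :
    ∃ a b c : ℤ,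
      ((2 * (Int.gcd 3 (NumberField.discr K) : ℤ) * a : ℤ) : ℚ) =
          Algebra.trace ℚ K ((e₁ : K) ^ 2) ∧
      (((Int.gcd 3 (NumberField.discr K) : ℤ) * b : ℤ) : ℚ) =
          Algebra.trace ℚ K ((e₁ : K) * (e₂ : K)) ∧
      ((2 * (Int.gcd 3 (NumberField.discr K) : ℤ) * c : ℤ) : ℚ) =
          Algebra.trace ℚ K ((e₂ : K) ^ 2) ∧
      Int.gcd a (Int.gcd b c) = 1 := by
  have hTK : ∀ x : 𝓞 K, Algebra.trace ℚ K (x : K) = ((Algebra.trace ℤ (𝓞 K) x : ℤ) : ℚ) :=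
    fun x => (Algebra.coe_trace_int x).symm
  have h1 : Algebra.trace ℤ (𝓞 K) e₁ = 0 := by rw [hTK] at he₁; exact_mod_cast he₁
  have h2 : Algebra.trace ℤ (𝓞 K) e₂ = 0 := by rw [hTK] at he₂; exact_mod_cast he₂
  have hb' : ∀ x : 𝓞 K, Algebra.trace ℤ (𝓞 K) x = 0 →
      ∃! mn : ℤ × ℤ, x = mn.1 • e₁ + mn.2 • e₂ := fun x hx =>
    hbasis x (by rw [hTK, hx]; norm_num)
  have hone : Algebra.trace ℤ (𝓞 K) 1 = 3 := by
    have := hTK 1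
    rw [show ((1 : 𝓞 K) : K) = algebraMap ℚ K 1 by simp, Algebra.trace_algebraMap, hdeg] at this
    have h : ((Algebra.trace ℤ (𝓞 K) 1 : ℤ) : ℚ) = ((3 : ℤ) : ℚ) := by rw [← this]; norm_num
    exact_mod_cast h
  have hu : ∃ u : 𝓞 K, Algebra.trace ℤ (𝓞 K) u = 1 := by
    by_cases hall : ∀ x : 𝓞 K, (3 : ℤ) ∣ Algebra.trace ℤ (𝓞 K) x
    · exfalso
      obtain ⟨b, hb⟩ := tf_basis e₁ e₂ 1 3 (by norm_num) h1 h2 hone hall hb'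
      have hd := tf_discr K e₁ e₂ 1 b hb _ rfl
      rw [mul_one, mul_one, mul_one, h1, h2, hone] at hd
      obtain ⟨k, hk⟩ := hall (e₁ * e₁)
      obtain ⟨l, hl⟩ := hall (e₁ * e₂)
      rw [hk, hl] at hd
      exact tf_not_nine (discr K) hfund ⟨k * Algebra.trace ℤ (𝓞 K) (e₂ * e₂) - 3 * l * l, by
        rw [hd]; ring⟩
    · push Not at hall
      obtain ⟨x, hx⟩ := hall
      have : Algebra.trace ℤ (𝓞 K) x % 3 = 1 ∨ Algebra.trace ℤ (𝓞 K) x % 3 = 2 := by omega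
      rcases this with h | h
      · refine ⟨x - (Algebra.trace ℤ (𝓞 K) x / 3) • 1, ?_⟩
        rw [map_sub, map_smul, hone, smul_eq_mul]; omega
      · refine ⟨(Algebra.trace ℤ (𝓞 K) x / 3 + 1) • 1 - x, ?_⟩
        rw [map_sub, map_smul, hone, smul_eq_mul]; omega
  obtain ⟨u, hu⟩ := hu
  obtain ⟨b, hb⟩ := tf_basis e₁ e₂ u 1 one_ne_zero h1 h2 hu (fun _ => one_dvd _) hb'
  obtain ⟨A, hA⟩ := tf_even b e₁ h1
  obtain ⟨C, hC⟩ := tf_even b e₂ h2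
  obtain ⟨⟨m, n⟩, hmn, -⟩ := hb' (1 - (3 : ℤ) • u) (by
    rw [map_sub, map_smul, hone, hu]; norm_num)
  have hd := tf_discr K e₁ e₂ u b hb _ rfl
  have hmul : ∀ y : 𝓞 K, Algebra.trace ℤ (𝓞 K) y = m * Algebra.trace ℤ (𝓞 K) (e₁ * y) +
      n * Algebra.trace ℤ (𝓞 K) (e₂ * y) + 3 * Algebra.trace ℤ (𝓞 K) (u * y) := by
    intro y
    have hy : y = m • (e₁ * y) + n • (e₂ * y) + (3 : ℤ) • (u * y) := by
      have := congrArg (· * y) hmn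
      simp only [sub_mul, add_mul, smul_mul_assoc, one_mul] at this
      rw [← this]; abel
    conv_lhs => rw [hy]
    simp only [map_add, map_smul, smul_eq_mul]
  have g1 := hmul e₁
  have g2 := hmul e₂
  have g3 := hmul u
  rw [mul_comm e₂ e₁, mul_comm u e₁] at g1
  rw [mul_comm u e₂] at g2
  rw [h1, hA] at g1
  rw [h2, hC] at g2
  rw [hu] at g3
  rw [hA, hC] at hd
  obtain ⟨a, b, c, ha, hbb, hc, hgcd⟩ := tf_core (discr K) A _ C _ _ _ m n hfund hd
    (by linarith) (by linarith) (by linarith)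
  refine ⟨a, b, c, ?_, ?_, ?_, hgcd⟩
  · rw [pow_two, ← map_mul, hTK, hA, mul_assoc, ha]
  · rw [← map_mul, hTK, hbb]
  · rw [pow_two, ← map_mul, hTK, hC, mul_assoc, hc]
end

section
/- Let K and L be totally real cubic number fields (number fields of degree 3 over ℚ all of whose complex embeddings are real) whose discriminants are both equal to the same fundamental discriminant d. If for every integer n the number of trace-zero algebraic integers x of K with Tr_{K/ℚ}(x²) = n equals the number of trace-zero algebraic integers y of L with Tr_{L/ℚ}(y²) = n, then K and L are isomorphic as fields. -/
/-- value of a binary quadratic form -/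
def qv (A B C : ℤ) (m n : ℤ) : ℤ := A * m ^ 2 + B * m * n + C * n ^ 2

lemma qv_ge_C {A B C : ℤ} (hA : 0 < A) (hB : 0 ≤ B) (hBA : B ≤ A) (hAC : A ≤ C) (m n : ℤ)
    (hn : n ≠ 0) : C ≤ qv A B C m n := by
  unfold qv
  have h1 : 1 ≤ n ^ 2 := by have := sq_nonneg n; have : n ^ 2 ≠ 0 := by positivity
                            omega
  have h2 : -(m ^ 2 + n ^ 2) ≤ 2 * (m * n) := by nlinarith [sq_nonneg (m + n)]
  have h4 : 0 ≤ m ^ 2 + m * n + n ^ 2 - 1 := by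
    have : 0 < m ^ 2 + m * n + n ^ 2 := by nlinarith [sq_nonneg (m + n), sq_nonneg m]
    omega
  by_cases hmn : 0 ≤ m * n
  · nlinarith [mul_nonneg hB hmn, mul_nonneg hA.le (sq_nonneg m)]
  · have h5 : A * (m * n) ≤ B * (m * n) := by nlinarith
    have h6 : A * (n ^ 2 - 1) ≤ C * (n ^ 2 - 1) := mul_le_mul_of_nonneg_right hAC (by omega)
    nlinarith [mul_nonneg hA.le h4]

lemma qv_ge_A {A B C : ℤ} (hA : 0 < A) (hB : 0 ≤ B) (hBA : B ≤ A) (hAC : A ≤ C) (m n : ℤ)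
    (hn : m ≠ 0 ∨ n ≠ 0) : A ≤ qv A B C m n := by
  by_cases h : n = 0
  · subst h
    have hm : m ≠ 0 := by simpa using hn
    have : 0 < m ^ 2 := by positivity
    unfold qv
    nlinarith
  · exact hAC.trans (qv_ge_C hA hB hBA hAC m n h)

lemma qv_finite {A B C : ℤ} (hA : 0 < A) (hB : 0 ≤ B) (hBA : B ≤ A) (hAC : A ≤ C) (k : ℤ) :
    Finite {p : ℤ × ℤ // qv A B C p.1 p.2 = k} := by
  apply Set.Finite.to_subtype (s := {p : ℤ × ℤ | qv A B C p.1 p.2 = k})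
  apply Set.Finite.subset ((Set.finite_Icc (-(2 * |k|)) (2 * |k|)).prod
    (Set.finite_Icc (-(2 * |k|)) (2 * |k|)))
  rintro ⟨m, n⟩ h
  simp only [Set.mem_ofPred_eq] at h
  have key : m ^ 2 + n ^ 2 ≤ 2 * k := by
    rw [← h]; unfold qv
    have hmn : - (m ^ 2 + n ^ 2) ≤ 2 * (m * n) := by nlinarith [sq_nonneg (m + n)]
    have h2 : B * - (m ^ 2 + n ^ 2) ≤ B * (2 * (m * n)) := mul_le_mul_of_nonneg_left hmn hB
    nlinarith [sq_nonneg m, sq_nonneg n, mul_nonneg (sub_nonneg.2 hBA) (sq_nonneg m),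
      mul_nonneg (sub_nonneg.2 hAC) (sq_nonneg n), mul_nonneg (sub_nonneg.2 hBA) (sq_nonneg n),
      mul_le_mul_of_nonneg_right (show 1 ≤ A from hA) (sq_nonneg m),
      mul_le_mul_of_nonneg_right (show 1 ≤ A from hA) (sq_nonneg n)]
  have hk := le_abs_self k
  have e1 : |m| ≤ m ^ 2 := by
    rw [← sq_abs]; rcases (abs_nonneg m).eq_or_lt with h0 | h0
    · rw [← h0]; simp
    · nlinarith
  have e2 : |n| ≤ n ^ 2 := by
    rw [← sq_abs]; rcases (abs_nonneg n).eq_or_lt with h0 | h0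
    · rw [← h0]; simp
    · nlinarith
  have := sq_nonneg m
  have := sq_nonneg n
  constructor <;> (simp only [Set.mem_Icc]; rw [← abs_le]; omega)

lemma C_le_of_counts {A B C B' C' : ℤ} (hA : 0 < A) (hB : 0 ≤ B) (hBA : B ≤ A) (hAC : A ≤ C)
    (hB' : 0 ≤ B') (hBA' : B' ≤ A) (hAC' : A ≤ C')
    (h : ∀ k : ℤ, Nat.card {p : ℤ × ℤ // qv A B C p.1 p.2 = k} =
      Nat.card {p : ℤ × ℤ // qv A B' C' p.1 p.2 = k}) : C' ≤ C := by
  by_contra hlt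
  push Not at hlt
  have := qv_finite hA hB hBA hAC C
  have hs : {p : ℤ × ℤ | qv A B' C' p.1 p.2 = C} ⊂ {p : ℤ × ℤ | qv A B C p.1 p.2 = C} := by
    refine ⟨?_, ?_⟩
    · rintro ⟨m, n⟩ hp
      simp only [Set.mem_ofPred_eq] at hp ⊢
      have hn : n = 0 := by
        by_contra hn
        have := qv_ge_C hA hB' hBA' hAC' m n hn
        omega
      subst hn
      simpa [qv] using hp
    · intro hsub
      have h1 : ((0, 1) : ℤ × ℤ) ∈ {p : ℤ × ℤ | qv A B C p.1 p.2 = C} := by simp [qv]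
      have h2 := hsub h1
      simp [qv] at h2
      omega
  have hfin : {p : ℤ × ℤ | qv A B C p.1 p.2 = C}.Finite := this
  have h3 := Set.ncard_lt_ncard hs hfin
  have h4 := h C
  simp only [Set.ncard_def, Set.encard] at h3
  exact absurd h4 (by
    have := h3
    simp only [Nat.card] at *
    exact this.ne')

lemma A_le_of_counts {A B C A' B' C' : ℤ} (hA : 0 < A) (hB : 0 ≤ B) (hBA : B ≤ A) (hAC : A ≤ C)
    (hA' : 0 < A') (hB' : 0 ≤ B') (hBA' : B' ≤ A') (hAC' : A' ≤ C')
    (h : ∀ k : ℤ, Nat.card {p : ℤ × ℤ // qv A B C p.1 p.2 = k} =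
      Nat.card {p : ℤ × ℤ // qv A' B' C' p.1 p.2 = k}) : A' ≤ A := by
  by_contra hlt
  push Not at hlt
  have := qv_finite hA hB hBA hAC A
  have hne : Nonempty {p : ℤ × ℤ // qv A B C p.1 p.2 = A} := ⟨⟨(1, 0), by simp [qv]⟩⟩
  have h1 : 0 < Nat.card {p : ℤ × ℤ // qv A B C p.1 p.2 = A} := Nat.card_pos
  rw [h A] at h1
  obtain ⟨⟨⟨m, n⟩, hp⟩⟩ := (Nat.card_pos_iff.1 h1).1
  simp only at hp
  by_cases h0 : m ≠ 0 ∨ n ≠ 0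
  · have := qv_ge_A hA' hB' hBA' hAC' m n h0
    omega
  · push Not at h0
    rw [h0.1, h0.2] at hp
    simp [qv] at hp
    omega

lemma forms_eq {A B C A' B' C' : ℤ} (hA : 0 < A) (hB : 0 ≤ B) (hBA : B ≤ A) (hAC : A ≤ C)
    (hA' : 0 < A') (hB' : 0 ≤ B') (hBA' : B' ≤ A') (hAC' : A' ≤ C')
    (hD : 4 * A * C - B ^ 2 = 4 * A' * C' - B' ^ 2)
    (h : ∀ k : ℤ, Nat.card {p : ℤ × ℤ // qv A B C p.1 p.2 = k} =
      Nat.card {p : ℤ × ℤ // qv A' B' C' p.1 p.2 = k}) : A = A' ∧ B = B' ∧ C = C' := by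
  have e1 : A = A' := le_antisymm
    (A_le_of_counts hA' hB' hBA' hAC' hA hB hBA hAC (fun k => (h k).symm))
    (A_le_of_counts hA hB hBA hAC hA' hB' hBA' hAC' h)
  subst e1
  have e2 : C = C' := le_antisymm
    (C_le_of_counts hA' hB' hBA' hAC' hB hBA hAC (fun k => (h k).symm))
    (C_le_of_counts hA hB hBA hAC hB' hBA' hAC' h)
  subst e2
  refine ⟨rfl, ?_, rfl⟩
  have : B ^ 2 = B' ^ 2 := by linarith
  exact (sq_eq_sq₀ hB hB').1 this

lemma cop_or {q p : ℤ} (hq : Prime q) : IsCoprime q p ∨ q ∣ p := by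
  rw [hq.coprime_iff_not_dvd]; tauto

lemma not_sq_dvd {d : ℤ} (hf : IsFundamentalDiscriminant d) {p : ℤ} (hp : Prime p) (h2 : ¬ (2 : ℤ) ∣ p)
    (h : p ^ 2 ∣ d) : False := by
  rcases hf with ⟨-, ⟨-, hs⟩ | ⟨h4, hs, -⟩⟩
  · exact hp.not_isUnit (hs p (by rwa [← sq]))
  · have hd : d = 4 * (d / 4) := by omega
    rw [hd] at h
    have hc : IsCoprime (p ^ 2) 4 := by
      have : IsCoprime (2 : ℤ) p := by
        rcases cop_or (p := p) Int.prime_two with h | h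
        · exact h
        · exact absurd h h2
      have h5 : IsCoprime (p ^ 2) ((2 : ℤ) ^ 2) := this.symm.pow
      norm_num at h5
      exact h5
    exact hp.not_isUnit (hs p (by rw [← sq]; exact hc.dvd_of_dvd_mul_left h))

lemma not_two_part {d t : ℤ} (hf : IsFundamentalDiscriminant d) (h : d = 4 * t)
    (ht : t % 4 = 0 ∨ t % 4 = 1) : False := by
  rcases hf with ⟨-, ⟨h1, hs⟩ | ⟨h4, hs, h5⟩⟩ <;> omega

lemma sq_mod_four (b : ℤ) : b ^ 2 % 4 = 0 ∨ b ^ 2 % 4 = 1 := by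
  rcases Int.even_or_odd' b with ⟨k, rfl | rfl⟩
  · left; ring_nf; omega
  · right; ring_nf; omega

lemma fund_mod {d : ℤ} (hf : IsFundamentalDiscriminant d) : d % 4 = 0 ∨ d % 4 = 1 := by
  rcases hf with ⟨-, ⟨h1, hs⟩ | ⟨h4, hs, h5⟩⟩ <;> omega

lemma nine_not_dvd {d : ℤ} (hf : IsFundamentalDiscriminant d) : ¬ (9 : ℤ) ∣ d := fun h =>
  not_sq_dvd hf Int.prime_three (by norm_num) (by norm_num; exact h)

/-- primitivity, case `3 ∤ d` -/
lemma prim_one {d A B C : ℤ} (hf : IsFundamentalDiscriminant d) (h3 : ¬ (3 : ℤ) ∣ d)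
    (hD : 4 * A * C - B ^ 2 = 3 * d) {p : ℤ} (hp : Prime p) (hA : p ∣ A) (hB : p ∣ B)
    (hC : p ∣ C) : False := by
  by_cases h2 : (2 : ℤ) ∣ p
  · obtain ⟨a, rfl⟩ := h2.trans hA
    obtain ⟨b, rfl⟩ := h2.trans hB
    obtain ⟨c, rfl⟩ := h2.trans hC
    have h4 : d % 4 = 0 := by
      have : 4 * (4 * (a * c) - b ^ 2) = 3 * d := by linarith
      omega
    have hb := sq_mod_four b
    have : 4 * (4 * (a * c) - b ^ 2) = 3 * d := by linarith
    exact not_two_part (t := d / 4) hf (by omega) (by omega)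
  · obtain ⟨a, rfl⟩ := hA
    obtain ⟨b, rfl⟩ := hB
    obtain ⟨c, rfl⟩ := hC
    have h5 : p ^ 2 ∣ 3 * d := ⟨4 * a * c - b ^ 2, by linarith⟩
    rcases cop_or (p := p) Int.prime_three with h | h
    · exact not_sq_dvd hf hp h2 (h.symm.pow_left.dvd_of_dvd_mul_left h5)
    · have : (3 : ℤ) ^ 2 ∣ 3 * d := (pow_dvd_pow_of_dvd h 2).trans h5
      omega

lemma prim_two {d a b c : ℤ} (hf : IsFundamentalDiscriminant d) 
    (hD : 3 * (4 * a * c - b ^ 2) = d) {p : ℤ} (hp : Prime p) (hA : p ∣ a) (hB : p ∣ b)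
    (hC : p ∣ c) : False := by
  by_cases h2 : (2 : ℤ) ∣ p
  · obtain ⟨a, rfl⟩ := h2.trans hA
    obtain ⟨b, rfl⟩ := h2.trans hB
    obtain ⟨c, rfl⟩ := h2.trans hC
    have hb := sq_mod_four b
    exact not_two_part (t := 3 * (4 * (a * c) - b ^ 2)) hf (by linarith) (by omega)
  · obtain ⟨a, rfl⟩ := hA
    obtain ⟨b, rfl⟩ := hB
    obtain ⟨c, rfl⟩ := hC
    exact not_sq_dvd hf hp h2 ⟨3 * (4 * a * c - b ^ 2), by linarith⟩

lemma integral_of_prim {A B C : ℤ} (hprim : ∀ p : ℤ, Prime p → p ∣ A → p ∣ B → p ∣ C → False)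
    (p : ℝ) (h : ∀ m n : ℤ, ∃ k : ℤ, p * (qv A B C m n : ℝ) ^ 3 = k) : ∃ k : ℤ, p = k := by
  let J : Ideal ℤ :=
    { carrier := {t : ℤ | ∃ k : ℤ, p * t = k}
      add_mem' := by
        rintro a b ⟨k, hk⟩ ⟨l, hl⟩
        exact ⟨k + l, by push_cast; rw [← hk, ← hl]; ring⟩
      zero_mem' := ⟨0, by simp⟩
      smul_mem' := by
        rintro c a ⟨k, hk⟩
        exact ⟨c * k, by push_cast [smul_eq_mul]; rw [← hk]; ring⟩ }
  have hJ : ∀ t : ℤ, t ∈ J ↔ ∃ k : ℤ, p * t = k := fun t => Iff.rfl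
  by_contra hcon
  have hJT : J ≠ ⊤ := by
    intro hT
    have : (1 : ℤ) ∈ J := by rw [hT]; trivial
    obtain ⟨k, hk⟩ := (hJ 1).1 this
    exact hcon ⟨k, by simpa using hk⟩
  obtain ⟨M, hM, hJM⟩ := Ideal.exists_le_maximal J hJT
  have hq : ∀ m n, qv A B C m n ∈ M := by
    intro m n
    apply hM.isPrime.mem_of_pow_mem 3
    apply hJM
    rw [hJ]
    obtain ⟨k, hk⟩ := h m n
    exact ⟨k, by push_cast; exact hk⟩
  have hA : A ∈ M := by simpa [qv] using hq 1 0
  have hC : C ∈ M := by simpa [qv] using hq 0 1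
  have hB : B ∈ M := by
    have h1 : A + B + C ∈ M := by simpa [qv] using hq 1 1
    have := M.sub_mem (M.sub_mem h1 hA) hC
    convert this using 1; ring
  by_cases hM0 : M = ⊥
  · rw [hM0, Ideal.mem_bot] at hA hB hC
    subst hA; subst hB; subst hC
    exact hprim 2 Int.prime_two (by simp) (by simp) (by simp)
  · have hpr := Submodule.IsPrincipal.prime_generator_of_isPrime M hM0
    have := fun x => Submodule.IsPrincipal.mem_iff_generator_dvd (x := x) M
    exact hprim _ hpr ((this A).1 hA) ((this B).1 hB) ((this C).1 hC)

lemma parity {d n i q : ℤ} (hd : d % 4 = 0 ∨ d % 4 = 1) (h : 27 * n ^ 2 + d * i ^ 2 = 4 * q) :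
    (d % 4 = 0 ∧ n % 2 = 0) ∨ (d % 4 = 1 ∧ n % 2 = i % 2) := by
  rcases hd with hd | hd
  · left; refine ⟨hd, ?_⟩
    obtain ⟨e, rfl⟩ : ∃ e, d = 4 * e := ⟨d / 4, by omega⟩
    have : 27 * n ^ 2 + 4 * (e * i ^ 2) = 4 * q := by linarith
    rcases Int.even_or_odd' n with ⟨k, rfl | rfl⟩
    · omega
    · ring_nf at this; omega
  · right; refine ⟨hd, ?_⟩
    obtain ⟨e, rfl⟩ : ∃ e, d = 4 * e + 1 := ⟨d / 4, by omega⟩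
    have : 27 * n ^ 2 + 4 * (e * i ^ 2) + i ^ 2 = 4 * q := by linarith
    rcases Int.even_or_odd' n with ⟨k, rfl | rfl⟩ <;>
    rcases Int.even_or_odd' i with ⟨l, rfl | rfl⟩ <;> ring_nf at this <;> omega

lemma parity_sum {d n i q n' i' q' : ℤ} (hd : d % 4 = 0 ∨ d % 4 = 1)
    (h : 27 * n ^ 2 + d * i ^ 2 = 4 * q) (h' : 27 * n' ^ 2 + d * i' ^ 2 = 4 * q') :
    (∃ k, 27 * (n * n') + d * (i * i') = 2 * k) ∧ (∃ k, n * i' - n' * i = 2 * k) := by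
  rcases parity hd h with ⟨h1, h2⟩ | ⟨h1, h2⟩ <;> rcases parity hd h' with ⟨h3, h4⟩ | ⟨h3, h4⟩
  · obtain ⟨e, rfl⟩ : ∃ e, d = 4 * e := ⟨d / 4, by omega⟩
    obtain ⟨a, rfl⟩ : ∃ e, n = 2 * e := ⟨n / 2, by omega⟩
    obtain ⟨b, rfl⟩ : ∃ e, n' = 2 * e := ⟨n' / 2, by omega⟩
    exact ⟨⟨54 * a * b + 2 * e * i * i', by ring⟩, ⟨a * i' - b * i, by ring⟩⟩
  · omega
  · omega
  · obtain ⟨e, rfl⟩ : ∃ e, d = 4 * e + 1 := ⟨d / 4, by omega⟩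
    obtain ⟨a, rfl⟩ : ∃ e, n = 2 * e + i := ⟨(n - i) / 2, by omega⟩
    obtain ⟨b, rfl⟩ : ∃ e, n' = 2 * e + i' := ⟨(n' - i') / 2, by omega⟩
    exact ⟨⟨54 * a * b + 27 * a * i' + 27 * b * i + 2 * e * i * i' + 14 * i * i', by ring⟩,
      ⟨a * i' - b * i, by ring⟩⟩

lemma final_sign {a b : ℝ} (hab : a ^ 2 + b ^ 2 = 1) (hb : b = 0) {s : ℝ} {n i n' : ℤ}
    (h : 9 * (n' : ℝ) = 9 * n * a - s * i * b) : n' = n ∨ n' = -n := by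
  subst hb
  have : (a - 1) * (a + 1) = 0 := by linarith
  rcases mul_eq_zero.1 this with h1 | h1
  · left
    have ha : a = 1 := by linarith
    subst ha
    have : (n' : ℝ) = n := by linarith
    exact_mod_cast this
  · right
    have ha : a = -1 := by linarith
    subst ha
    have : (n' : ℝ) = -n := by linarith
    exact_mod_cast this

lemma core {d A B C : ℤ} (hf : IsFundamentalDiscriminant d) (hd : 12 < d)
    (hD : 4 * A * C - B ^ 2 = 3 * d) (N I N' I' : ℤ → ℤ → ℤ)
    (hrel : ∀ m n, 27 * N m n ^ 2 + d * I m n ^ 2 = 4 * qv A B C m n ^ 3)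
    (hrel' : ∀ m n, 27 * N' m n ^ 2 + d * I' m n ^ 2 = 4 * qv A B C m n ^ 3)
    (a b s : ℝ) (hs : 0 < s) (hs2 : s ^ 2 = 3 * d) (hab : a ^ 2 + b ^ 2 = 1)
    (h1 : ∀ m n, 9 * (N' m n : ℝ) = 9 * N m n * a - s * I m n * b)
    (h2 : ∀ m n, s * (I' m n : ℝ) = 9 * N m n * b + s * I m n * a) :
    N' 1 0 = N 1 0 ∨ N' 1 0 = - N 1 0 := by
  have hmod := fund_mod hf
  have hrelR : ∀ m n, 27 * (N m n : ℝ) ^ 2 + d * (I m n : ℝ) ^ 2 = 4 * (qv A B C m n : ℝ) ^ 3 := by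
    intro m n; exact_mod_cast hrel m n
  have f1 : ∀ m n, 27 * ((N m n : ℝ) * N' m n) + d * ((I m n : ℝ) * I' m n)
      = 4 * a * (qv A B C m n : ℝ) ^ 3 := by
    intro m n
    have e1 := h1 m n
    have e2 := h2 m n
    have e3 := hrelR m n
    linear_combination 3 * (N m n : ℝ) * e1 + s * (I m n : ℝ) / 3 * e2
      - (I m n : ℝ) * I' m n / 3 * hs2 + (I m n : ℝ)^2 * a / 3 * hs2 + a * e3
  have f2 : ∀ m n, 3 * s * ((N m n : ℝ) * I' m n - N' m n * I m n)
      = 4 * b * (qv A B C m n : ℝ) ^ 3 := by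
    intro m n
    have e1 := h1 m n
    have e2 := h2 m n
    have e3 := hrelR m n
    linear_combination 3 * (N m n : ℝ) * e2 - s * (I m n : ℝ) / 3 * e1
      + (I m n : ℝ)^2 * b / 3 * hs2 + b * e3
  apply final_sign hab ?_ (h1 1 0)
  by_cases h3 : (3 : ℤ) ∣ d
  · obtain ⟨e, rfl⟩ := h3
    have he : ¬ (3 : ℤ) ∣ e := by
      intro h; exact nine_not_dvd hf (by omega)
    have hq3 : ∀ m n, (3 : ℤ) ∣ qv A B C m n := by
      intro m n
      have : (3 : ℤ) ∣ 4 * qv A B C m n ^ 3 :=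
        ⟨9 * N m n ^ 2 + e * I m n ^ 2, by rw [← hrel]; ring⟩
      rcases Int.prime_three.dvd_or_dvd this with h | h
      · norm_num at h
      · exact Int.prime_three.dvd_of_dvd_pow h
    have hA : (3 : ℤ) ∣ A := by simpa [qv] using hq3 1 0
    have hC : (3 : ℤ) ∣ C := by simpa [qv] using hq3 0 1
    have hB : (3 : ℤ) ∣ B := by
      have : (3 : ℤ) ∣ A + B + C := by simpa [qv] using hq3 1 1
      omega
    obtain ⟨A, rfl⟩ := hA
    obtain ⟨B, rfl⟩ := hB
    obtain ⟨C, rfl⟩ := hC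
    have hqq : ∀ m n, qv (3 * A) (3 * B) (3 * C) m n = 3 * qv A B C m n := by
      intro m n; unfold qv; ring
    have hI : ∀ (N I : ℤ → ℤ → ℤ), (∀ m n, 27 * N m n ^ 2 + 3 * e * I m n ^ 2 =
        4 * qv (3 * A) (3 * B) (3 * C) m n ^ 3) → ∀ m n, (3 : ℤ) ∣ I m n := by
      intro N I h m n
      have h := h m n
      rw [hqq] at h
      have h9 : (3 : ℤ) ∣ e * I m n ^ 2 :=
        ⟨12 * qv A B C m n ^ 3 - 3 * N m n ^ 2, by linarith⟩
      rcases Int.prime_three.dvd_or_dvd h9 with h | h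
      · exact absurd h he
      · exact Int.prime_three.dvd_of_dvd_pow h
    choose J hJ using hI N I hrel
    choose J' hJ' using hI N' I' hrel'
    have hprim : ∀ p : ℤ, Prime p → p ∣ A → p ∣ B → p ∣ C → False :=
      fun p hp hA hB hC => prim_two (d := 3 * e) hf (by linarith) hp hA hB hC
    have r1 : ∀ m n, 27 * N m n ^ 2 + (27 * e) * J m n ^ 2 = 4 * (27 * qv A B C m n ^ 3) := by
      intro m n; have := hrel m n; rw [hJ, hqq] at this; linarith
    have r1' : ∀ m n, 27 * N' m n ^ 2 + (27 * e) * J' m n ^ 2 = 4 * (27 * qv A B C m n ^ 3) := by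
      intro m n; have := hrel' m n; rw [hJ', hqq] at this; linarith
    have hs2' : s ^ 2 = 9 * e := by rw [hs2]; push_cast; ring
    have par := fun m n => parity_sum (d := 27 * e) (by omega) (r1 m n) (r1' m n)
    obtain ⟨p, hp⟩ := integral_of_prim hprim (2 * a) (by
      intro m n
      obtain ⟨⟨k, hk⟩, -⟩ := par m n
      have := f1 m n
      rw [hJ, hJ', hqq] at this
      have hkR : 27 * ((N m n : ℝ) * N' m n) + (27 * e) * ((J m n : ℝ) * J' m n) = 2 * k := by
        exact_mod_cast hk
      push_cast at this
      obtain ⟨l, hl⟩ : ∃ l, k = 27 * l := ⟨k / 27, by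
        have : 27 * (N m n * N' m n + e * (J m n * J' m n)) = 2 * k := by rw [← hk]; ring
        omega⟩
      refine ⟨l, ?_⟩
      rw [hl] at hkR
      push_cast at hkR
      linarith)
    obtain ⟨r, hr⟩ := integral_of_prim hprim (6 * b / s) (by
      intro m n
      obtain ⟨-, ⟨k, hk⟩⟩ := par m n
      have := f2 m n
      rw [hJ, hJ', hqq] at this
      have hkR : ((N m n : ℝ) * J' m n) - (N' m n * J m n) = 2 * k := by
        exact_mod_cast hk
      push_cast at this
      refine ⟨k, ?_⟩
      field_simp
      linear_combination -(1/18) * this + s / 2 * hkR)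
    have hpr : p ^ 2 + e * r ^ 2 = 4 := by
      have : (p : ℝ) ^ 2 + e * r ^ 2 = 4 := by
        rw [← hp, ← hr]
        field_simp
        linear_combination 4 * s ^ 2 * hab - 4 * b ^ 2 * hs2'
      exact_mod_cast this
    have hr0 : r = 0 := by
      by_contra h
      have : 0 < r ^ 2 := by positivity
      nlinarith [sq_nonneg p]
    rw [hr0] at hr
    field_simp at hr
    simpa using hr
  · have hprim : ∀ p : ℤ, Prime p → p ∣ A → p ∣ B → p ∣ C → False :=
      fun p hp hA hB hC => prim_one hf h3 hD hp hA hB hC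
    have par := fun m n => parity_sum hmod (hrel m n) (hrel' m n)
    obtain ⟨p, hp⟩ := integral_of_prim hprim (2 * a) (by
      intro m n
      obtain ⟨⟨k, hk⟩, -⟩ := par m n
      have := f1 m n
      have hkR : 27 * ((N m n : ℝ) * N' m n) + d * ((I m n : ℝ) * I' m n) = 2 * k := by
        exact_mod_cast hk
      exact ⟨k, by linarith⟩)
    obtain ⟨r, hr⟩ := integral_of_prim hprim (2 * b / (3 * s)) (by
      intro m n
      obtain ⟨-, ⟨k, hk⟩⟩ := par m n
      have := f2 m n
      have hkR : ((N m n : ℝ) * I' m n) - (N' m n * I m n) = 2 * k := by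
        exact_mod_cast hk
      refine ⟨k, ?_⟩
      field_simp
      linear_combination -(1/2) * this + 3 * s / 2 * hkR)
    have hpr : p ^ 2 + 27 * d * r ^ 2 = 4 := by
      have : (p : ℝ) ^ 2 + 27 * d * r ^ 2 = 4 := by
        rw [← hp, ← hr]
        field_simp
        linear_combination 36 * s ^ 2 * hab - 36 * b ^ 2 * hs2
      exact_mod_cast this
    have hr0 : r = 0 := by
      by_contra h
      have : 0 < r ^ 2 := by positivity
      nlinarith [sq_nonneg p]
    rw [hr0] at hr
    field_simp at hr
    simpa using hr

lemma exists_unit {z w z' w' : ℂ} (hz0 : z ≠ 0) (hz : Complex.normSq z = Complex.normSq z')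
    (hw : Complex.normSq w = Complex.normSq w')
    (hzw : Complex.normSq (z + w) = Complex.normSq (z' + w')) :
    ∃ k : ℂ, Complex.normSq k = 1 ∧ ((z' = k * z ∧ w' = k * w) ∨
      (z' = k * (starRingEnd ℂ) z ∧ w' = k * (starRingEnd ℂ) w)) := by
  have hn0 : Complex.normSq z ≠ 0 := by simpa using hz0
  have hz0' : z' ≠ 0 := by
    intro h; rw [h] at hz; simp at hz; exact hz0 hz
  have hre : z.re * w.re + z.im * w.im = z'.re * w'.re + z'.im * w'.im := by
    simp only [Complex.normSq_apply, Complex.add_re, Complex.add_im] at hz hw hzw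
    linarith
  have him : (z.re * w.im - z.im * w.re) ^ 2 = (z'.re * w'.im - z'.im * w'.re) ^ 2 := by
    simp only [Complex.normSq_apply, Complex.add_re, Complex.add_im] at hz hw hzw
    have e1 : (z.re * w.im - z.im * w.re) ^ 2 = (z.re * z.re + z.im * z.im) * (w.re * w.re + w.im * w.im)
      - (z.re * w.re + z.im * w.im) ^ 2 := by ring
    have e2 : (z'.re * w'.im - z'.im * w'.re) ^ 2 = (z'.re * z'.re + z'.im * z'.im) *
      (w'.re * w'.re + w'.im * w'.im) - (z'.re * w'.re + z'.im * w'.im) ^ 2 := by ring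
    rw [e1, e2, hre, hz, hw]
  have hzz : (starRingEnd ℂ) z * z = (starRingEnd ℂ) z' * z' := by
    rw [← Complex.normSq_eq_conj_mul_self, ← Complex.normSq_eq_conj_mul_self, hz]
  have hcz : (starRingEnd ℂ) z ≠ 0 := by simpa using hz0
  have hcz' : (starRingEnd ℂ) z' ≠ 0 := by simpa using hz0'
  rcases sq_eq_sq_iff_eq_or_eq_neg.1 him with h | h
  · refine ⟨z' / z, by rw [Complex.normSq_div, ← hz, div_self hn0], Or.inl ⟨by field_simp, ?_⟩⟩
    have : (starRingEnd ℂ) z * w = (starRingEnd ℂ) z' * w' := by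
      apply Complex.ext <;> simp <;> linarith
    rw [div_mul_eq_mul_div, eq_div_iff hz0]
    apply mul_left_cancel₀ hcz'
    linear_combination -z * this + w * hzz
  · refine ⟨z' / (starRingEnd ℂ) z, by rw [Complex.normSq_div, Complex.normSq_conj, ← hz, div_self hn0], Or.inr ⟨by field_simp, ?_⟩⟩
    have : z * (starRingEnd ℂ) w = (starRingEnd ℂ) z' * w' := by
      apply Complex.ext <;> simp <;> linarith
    rw [div_mul_eq_mul_div, eq_div_iff hcz]
    apply mul_left_cancel₀ hcz'
    linear_combination -(starRingEnd ℂ) z * this + (starRingEnd ℂ) w * hzz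

lemma combine {d A B C : ℤ} (hf : IsFundamentalDiscriminant d) (hd : 12 < d) (hA : 0 < A)
    (hD : 4 * A * C - B ^ 2 = 3 * d) (N I N' I' : ℤ → ℤ → ℤ) (z w z' w' : ℂ)
    (h : ∀ m n : ℤ, (m * z + n * w) ^ 3 = ⟨27 * N m n / 2, 3 * (√3 * √d) * I m n / 2⟩)
    (h' : ∀ m n : ℤ, (m * z' + n * w') ^ 3 = ⟨27 * N' m n / 2, 3 * (√3 * √d) * I' m n / 2⟩)
    (hn : ∀ m n : ℤ, Complex.normSq (m * z + n * w) = 3 * qv A B C m n)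
    (hn' : ∀ m n : ℤ, Complex.normSq (m * z' + n * w') = 3 * qv A B C m n) :
    N' 1 0 = N 1 0 ∨ N' 1 0 = - N 1 0 := by
  have hdR : (12 : ℝ) < d := by exact_mod_cast hd
  obtain ⟨s, hs⟩ : ∃ s, s = √3 * √(d : ℝ) := ⟨_, rfl⟩
  have hs0 : 0 < s := by rw [hs]; positivity
  have hs2 : s ^ 2 = 3 * d := by
    rw [hs, mul_pow, Real.sq_sqrt (by norm_num), Real.sq_sqrt (by linarith)]
  rw [← hs] at h h'
  have rel : ∀ (N I : ℤ → ℤ → ℤ) (z w : ℂ)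
      (_ : ∀ m n : ℤ, (m * z + n * w) ^ 3 = ⟨27 * N m n / 2, 3 * s * I m n / 2⟩)
      (_ : ∀ m n : ℤ, Complex.normSq (m * z + n * w) = 3 * qv A B C m n),
      ∀ m n, 27 * N m n ^ 2 + d * I m n ^ 2 = 4 * qv A B C m n ^ 3 := by
    intro N I z w h hn m n
    have e := congrArg Complex.normSq (h m n)
    rw [map_pow, hn, Complex.normSq_apply] at e
    simp only at e
    have : 27 * (N m n : ℝ) ^ 2 + d * (I m n : ℝ) ^ 2 = 4 * (qv A B C m n : ℝ) ^ 3 := by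
      linear_combination - (4 / 27) * e - (I m n : ℝ) ^ 2 / 3 * hs2
    exact_mod_cast this
  have hz := hn 1 0
  have hw := hn 0 1
  have hzw := hn 1 1
  have hz' := hn' 1 0
  have hw' := hn' 0 1
  have hzw' := hn' 1 1
  simp only [Int.cast_one, Int.cast_zero, one_mul, zero_mul, add_zero, zero_add] at hz hw hzw hz' hw' hzw'
  have hz0 : z ≠ 0 := by
    rintro rfl
    simp [qv] at hz
    omega
  obtain ⟨k, hk, hkk⟩ := exists_unit hz0 (hz.trans hz'.symm) (hw.trans hw'.symm) (hzw.trans hzw'.symm)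
  have hk3 : (k ^ 3).re ^ 2 + (k ^ 3).im ^ 2 = 1 := by
    have : Complex.normSq (k ^ 3) = 1 := by rw [map_pow, hk, one_pow]
    rw [Complex.normSq_apply] at this
    linarith
  rcases hkk with ⟨rfl, rfl⟩ | ⟨rfl, rfl⟩
  · have e : ∀ m n : ℤ, (⟨27 * N' m n / 2, 3 * s * I' m n / 2⟩ : ℂ) =
        k ^ 3 * ⟨27 * N m n / 2, 3 * s * I m n / 2⟩ := by
      intro m n
      rw [← h, ← h']; ring
    refine core hf hd hD N I N' I' (rel N I _ _ h hn) (rel N' I' _ _ h' hn') _ _ s hs0 hs2 hk3 ?_ ?_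
    · intro m n
      have := congrArg Complex.re (e m n)
      simp only [Complex.mul_re] at this
      linarith
    · intro m n
      have := congrArg Complex.im (e m n)
      simp only [Complex.mul_im] at this
      linarith
  · have e : ∀ m n : ℤ, (⟨27 * N' m n / 2, 3 * s * I' m n / 2⟩ : ℂ) =
        k ^ 3 * (starRingEnd ℂ) ⟨27 * N m n / 2, 3 * s * I m n / 2⟩ := by
      intro m n
      rw [← h, ← h']
      simp only [map_pow, map_add, map_mul, map_intCast]
      ring
    refine core hf hd hD N (fun m n => - I m n) N' I' (fun m n => by rw [neg_sq]; exact rel N I _ _ h hn m n) (rel N' I' _ _ h' hn') _ _ s hs0 hs2 hk3 ?_ ?_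
    · intro m n
      have := congrArg Complex.re (e m n)
      simp only [Complex.mul_re, Complex.conj_re, Complex.conj_im] at this
      push_cast
      linarith
    · intro m n
      have := congrArg Complex.im (e m n)
      simp only [Complex.mul_im, Complex.conj_re, Complex.conj_im] at this
      push_cast
      linarith

open Module in
lemma change_basis {M : Type*} [AddCommGroup M] (b : Basis (Fin 2) ℤ M) (p q r s : ℤ)
    (hD : (p * s - q * r) * (p * s - q * r) = 1) :
    ∃ b' : Basis (Fin 2) ℤ M, b' 0 = p • b 0 + q • b 1 ∧ b' 1 = r • b 0 + s • b 1 := by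
  have hli : LinearIndependent ℤ ![b 0, b 1] := by
    have := b.linearIndependent
    convert this using 1
    ext i; fin_cases i <;> rfl
  rw [LinearIndependent.pair_iff] at hli
  have hD0 : p * s - q * r ≠ 0 := by rintro h; rw [h] at hD; simp at hD
  refine ⟨Basis.mk (v := ![p • b 0 + q • b 1, r • b 0 + s • b 1]) ?_ ?_, ?_, ?_⟩
  · rw [LinearIndependent.pair_iff]
    intro x y h
    have h1 : (x * p + y * r) • b 0 + (x * q + y * s) • b 1 = 0 := by
      rw [← h]; module
    obtain ⟨e1, e2⟩ := hli _ _ h1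
    constructor
    · have : x * (p * s - q * r) = 0 := by linear_combination s * e1 - r * e2
      exact (mul_eq_zero.1 this).resolve_right hD0
    · have : y * (p * s - q * r) = 0 := by linear_combination p * e2 - q * e1
      exact (mul_eq_zero.1 this).resolve_right hD0
  · rw [← b.span_eq, Submodule.span_le]
    rintro _ ⟨i, rfl⟩
    simp only [Matrix.range_cons, Matrix.range_empty, Set.union_empty, Set.singleton_union,
      SetLike.mem_coe, Submodule.mem_span_pair]
    fin_cases i
    · refine ⟨(p * s - q * r) * s, -((p * s - q * r) * q), ?_⟩
      calc _ = ((p * s - q * r) * (p * s - q * r)) • b 0 := by module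
        _ = b 0 := by rw [hD, one_smul]
    · refine ⟨-((p * s - q * r) * r), (p * s - q * r) * p, ?_⟩
      calc _ = ((p * s - q * r) * (p * s - q * r)) • b 1 := by module
        _ = b 1 := by rw [hD, one_smul]
  · simp
  · simp

open Module in
lemma reduce {M : Type*} [AddCommGroup M] (f : M →ₗ[ℤ] M →ₗ[ℤ] ℤ)
    (hsymm : ∀ x y, f x y = f y x) (hpos : ∀ x, x ≠ 0 → 0 < f x x) (b₀ : Basis (Fin 2) ℤ M) :
    ∃ b : Basis (Fin 2) ℤ M, 0 ≤ f (b 0) (b 1) ∧ 2 * f (b 0) (b 1) ≤ f (b 0) (b 0) ∧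
      f (b 0) (b 0) ≤ f (b 1) (b 1) := by
  have hnn : ∀ x, 0 ≤ f x x := by
    intro x
    by_cases h : x = 0
    · simp [h]
    · exact (hpos x h).le
  let g : Basis (Fin 2) ℤ M → ℕ := fun b => (f (b 0) (b 0) + f (b 1) (b 1)).toNat
  have : Nonempty (Basis (Fin 2) ℤ M) := ⟨b₀⟩
  obtain ⟨b, hb⟩ : ∃ b, ∀ b', g b ≤ g b' :=
    ⟨Function.argmin g, fun b' => Function.argmin_le g b'⟩
  have hb' : ∀ b' : Basis (Fin 2) ℤ M, f (b 0) (b 0) + f (b 1) (b 1) ≤ f (b' 0) (b' 0) + f (b' 1) (b' 1) := by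
    intro b'
    have := hb b'
    simp only [g] at this
    have h1 := hnn (b 0)
    have h2 := hnn (b 1)
    have h3 := hnn (b' 0)
    have h4 := hnn (b' 1)
    omega
  have key : ∀ p q r s : ℤ, (p * s - q * r) * (p * s - q * r) = 1 →
      f (b 0) (b 0) + f (b 1) (b 1) ≤ (p ^ 2 + r ^ 2) * f (b 0) (b 0) +
        2 * (p * q + r * s) * f (b 0) (b 1) + (q ^ 2 + s ^ 2) * f (b 1) (b 1) := by
    intro p q r s h
    obtain ⟨b', h0, h1⟩ := change_basis b p q r s h
    have := hb' b'
    rw [h0, h1] at this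
    simp only [map_add, map_smul, LinearMap.add_apply, LinearMap.smul_apply, smul_eq_mul,
      hsymm (b 1) (b 0)] at this
    linarith
  have k1 := key 1 0 1 1 (by norm_num)
  have k2 := key 1 0 (-1) 1 (by norm_num)
  have k3 := key 1 1 0 1 (by norm_num)
  have k4 := key 1 (-1) 0 1 (by norm_num)
  have fin : ∀ p q r s : ℤ, (p * s - q * r) * (p * s - q * r) = 1 →
      ∃ b' : Basis (Fin 2) ℤ M, 
        f (b' 0) (b' 0) = p ^ 2 * f (b 0) (b 0) + 2 * p * q * f (b 0) (b 1) + q ^ 2 * f (b 1) (b 1)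
        ∧ f (b' 0) (b' 1) = p * r * f (b 0) (b 0) + (p * s + q * r) * f (b 0) (b 1)
          + q * s * f (b 1) (b 1)
        ∧ f (b' 1) (b' 1) = r ^ 2 * f (b 0) (b 0) + 2 * r * s * f (b 0) (b 1)
          + s ^ 2 * f (b 1) (b 1) := by
    intro p q r s h
    obtain ⟨b', h0, h1⟩ := change_basis b p q r s h
    refine ⟨b', ?_⟩
    rw [h0, h1]
    simp only [map_add, map_smul, LinearMap.add_apply, LinearMap.smul_apply, smul_eq_mul,
      hsymm (b 1) (b 0)]
    refine ⟨by ring, by ring, by ring⟩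
  rcases le_total (f (b 0) (b 0)) (f (b 1) (b 1)) with h1 | h1 <;>
  rcases le_total 0 (f (b 0) (b 1)) with h2 | h2
  · exact ⟨b, h2, by linarith, h1⟩
  · obtain ⟨b', e1, e2, e3⟩ := fin 1 0 0 (-1) (by norm_num)
    exact ⟨b', by rw [e2]; linarith, by rw [e1, e2]; linarith, by rw [e1, e3]; linarith⟩
  · obtain ⟨b', e1, e2, e3⟩ := fin 0 1 1 0 (by norm_num)
    exact ⟨b', by rw [e2]; linarith, by rw [e1, e2]; linarith, by rw [e1, e3]; linarith⟩
  · obtain ⟨b', e1, e2, e3⟩ := fin 0 1 (-1) 0 (by norm_num)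
    exact ⟨b', by rw [e2]; linarith, by rw [e1, e2]; linarith, by rw [e1, e3]; linarith⟩

open NumberField Module in
lemma real_embeddings (K : Type*) [Field K] [NumberField K]
    (hdegK : Module.finrank ℚ K = 3)
    (htrK : ∀ (φ : K →+* ℂ) (x : K), (φ x).im = 0) :
    ∃ ρ : Fin 3 → K →+* ℝ, 
      (∀ x, (Algebra.trace ℚ K x : ℝ) = ρ 0 x + ρ 1 x + ρ 2 x) ∧
      (∀ x, (Algebra.norm ℚ x : ℝ) = ρ 0 x * ρ 1 x * ρ 2 x) := by
  have hc : Fintype.card (Fin 3) = Fintype.card (K →ₐ[ℚ] ℂ) := by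
    rw [AlgHom.card, hdegK]; rfl
  let e := Fintype.equivOfCardEq hc
  have hreal : ∀ i, ComplexEmbedding.IsReal (e i).toRingHom := by
    intro i
    rw [ComplexEmbedding.isReal_iff]
    ext x
    simp only [ComplexEmbedding.conjugate_coe_eq]
    exact Complex.conj_eq_iff_im.2 (htrK _ x)
  refine ⟨fun i => (hreal i).embedding, ?_, ?_⟩
  · intro x
    have h := trace_eq_sum_embeddings (K := ℚ) (E := ℂ) (x := x)
    rw [← e.sum_comp, Fin.sum_univ_three] at h
    have he : ∀ i, e i x = (((hreal i).embedding x : ℝ) : ℂ) := by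
      intro i; rw [ComplexEmbedding.IsReal.coe_embedding_apply]; rfl
    rw [he, he, he] at h
    simp only [eq_ratCast] at h
    exact_mod_cast h
  · intro x
    have h := Algebra.norm_eq_prod_embeddings ℚ ℂ x
    rw [← e.prod_comp, Fin.prod_univ_three] at h
    have he : ∀ i, e i x = (((hreal i).embedding x : ℝ) : ℂ) := by
      intro i; rw [ComplexEmbedding.IsReal.coe_embedding_apply]; rfl
    rw [he, he, he] at h
    simp only [eq_ratCast] at h
    exact_mod_cast h

open NumberField Module in
lemma det_sq {K : Type*} [Field K] [NumberField K] (ρ : Fin 3 → K →+* ℝ)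
    (hT : ∀ x, (Algebra.trace ℚ K x : ℝ) = ρ 0 x + ρ 1 x + ρ 2 x)
    (b : Basis (Fin 3) ℤ (𝓞 K)) :
    (Matrix.of fun i j : Fin 3 => ρ j (b i)).det ^ 2 = (discr K : ℝ) := by
  rw [← discr_eq_discr K b, Algebra.discr_def]
  have h0 : ∀ M : Matrix (Fin 3) (Fin 3) ℝ, M.det ^ 2 = (M * M.transpose).det := by
    intro M; rw [Matrix.det_mul, Matrix.det_transpose, sq]
  rw [← eq_intCast (Int.castRingHom ℝ), RingHom.map_det, h0]
  congr 1
  ext i j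
  rw [Matrix.mul_apply, Fin.sum_univ_three]
  simp only [Matrix.transpose_apply, Matrix.of_apply, RingHom.mapMatrix_apply, Matrix.map_apply,
    Algebra.traceMatrix_apply, Algebra.traceForm_apply, eq_intCast]
  have h := hT ((b i * b j : 𝓞 K) : K)
  rw [← Algebra.coe_trace_int] at h
  simp only [map_mul, Rat.cast_intCast] at h
  exact h.symm

open NumberField in
lemma discr_gt {K : Type*} [Field K] [NumberField K] (hdegK : Module.finrank ℚ K = 3)
    (htrK : ∀ (φ : K →+* ℂ) (x : K), (φ x).im = 0) : 12 < |discr K| := by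
  have : IsTotallyReal K := by
    rw [isTotallyReal_iff]
    intro v
    rw [InfinitePlace.isReal_iff, ComplexEmbedding.isReal_iff]
    ext x
    simp only [ComplexEmbedding.conjugate_coe_eq]
    exact Complex.conj_eq_iff_im.2 (htrK _ x)
  have h := abs_discr_ge' K
  rw [hdegK, IsTotallyReal.nrComplexPlaces_eq_zero] at h
  norm_num [Nat.factorial] at h
  have : (12 : ℝ) < |(discr K : ℝ)| := by linarith
  exact_mod_cast this

open NumberField Module in
lemma index_form {K : Type*} [Field K] [NumberField K] (hdegK : Module.finrank ℚ K = 3)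
    (ρ : Fin 3 → K →+* ℝ)
    (hT : ∀ x, (Algebra.trace ℚ K x : ℝ) = ρ 0 x + ρ 1 x + ρ 2 x) {d : ℤ} (hd : 0 < d)
    (hdK : discr K = d) :
    ∃ I : 𝓞 K → ℤ, ∀ x : 𝓞 K, (ρ 0 x - ρ 1 x) * (ρ 0 x - ρ 2 x) * (ρ 1 x - ρ 2 x)
      = √d * I x := by
  have hr : finrank ℤ (𝓞 K) = 3 := by rw [RingOfIntegers.rank, hdegK]
  let b : Basis (Fin 3) ℤ (𝓞 K) := finBasisOfFinrankEq ℤ (𝓞 K) hr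
  obtain ⟨M, hM⟩ : ∃ M : Matrix (Fin 3) (Fin 3) ℝ, M = Matrix.of fun i j : Fin 3 => ρ j (b i) :=
    ⟨_, rfl⟩
  have hdet := det_sq ρ hT b
  rw [← hM, hdK] at hdet
  have hdR : (0 : ℝ) < d := by exact_mod_cast hd
  have h1 : ∀ x : 𝓞 K, (ρ 0 x - ρ 1 x) * (ρ 0 x - ρ 2 x) * (ρ 1 x - ρ 2 x) =
      - ((Matrix.of fun i k : Fin 3 => b.repr (x ^ (i : ℕ)) k).det : ℤ) * M.det := by
    intro x
    have e : (Matrix.of fun i j : Fin 3 => (ρ j x) ^ (i : ℕ)) =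
        (Int.castRingHom ℝ).mapMatrix (Matrix.of fun i k : Fin 3 => b.repr (x ^ (i : ℕ)) k) * M := by
      ext i j
      have := congrArg (fun y : 𝓞 K => ρ j (y : K)) (b.sum_repr (x ^ (i : ℕ)))
      rw [Matrix.mul_apply]
      simp only [Fin.sum_univ_three, map_add, map_pow] at this
      simp only [Fin.sum_univ_three, hM, Matrix.of_apply, RingHom.mapMatrix_apply, Matrix.map_apply,
        eq_intCast]
      rw [← this]
      simp
    have e2 := congrArg Matrix.det e
    rw [Matrix.det_mul, ← RingHom.map_det, eq_intCast] at e2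
    rw [neg_mul, ← e2, Matrix.det_fin_three]
    simp
    ring
  have h2 : (M.det - √d) * (M.det + √d) = 0 := by
    have := Real.sq_sqrt hdR.le
    linear_combination hdet - this
  rcases mul_eq_zero.1 h2 with h | h
  · refine ⟨fun x => - (Matrix.of fun i k : Fin 3 => b.repr (x ^ (i : ℕ)) k).det, fun x => ?_⟩
    rw [h1, sub_eq_zero.1 h]; push_cast; ring
  · refine ⟨fun x => (Matrix.of fun i k : Fin 3 => b.repr (x ^ (i : ℕ)) k).det, fun x => ?_⟩
    rw [h1, eq_neg_of_add_eq_zero_left h]; ring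

open NumberField Module in
lemma trace_sq_even {K : Type*} [Field K] [NumberField K] (hdegK : Module.finrank ℚ K = 3)
    (x : 𝓞 K) (hx : Algebra.trace ℤ (𝓞 K) x = 0) :
    ∃ k, Algebra.trace ℤ (𝓞 K) (x * x) = 2 * k := by
  have hr : finrank ℤ (𝓞 K) = 3 := by rw [RingOfIntegers.rank, hdegK]
  let b : Basis (Fin 3) ℤ (𝓞 K) := finBasisOfFinrankEq ℤ (𝓞 K) hr
  rw [Algebra.trace_eq_matrix_trace b] at hx ⊢
  rw [map_mul]
  generalize Algebra.leftMulMatrix b x = M at *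
  rw [Matrix.trace_fin_three] at hx ⊢
  simp only [Matrix.mul_apply, Fin.sum_univ_three]
  refine ⟨M 0 1 * M 1 0 + M 0 2 * M 2 0 + M 1 2 * M 2 1 - M 0 0 * M 1 1 - M 0 0 * M 2 2
    - M 1 1 * M 2 2, ?_⟩
  linear_combination (M 0 0 + M 1 1 + M 2 2) * hx

open NumberField Module in
lemma gram_aux {K : Type*} [Field K] [NumberField K] (hdegK : Module.finrank ℚ K = 3)
    (b : Basis (Fin 2) ℤ (LinearMap.ker (Algebra.trace ℤ (𝓞 K)))) (w : 𝓞 K) (g : ℤ) (hg : g ≠ 0)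
    (hw : Algebra.trace ℤ (𝓞 K) w = g) (hall : ∀ x, g ∣ Algebra.trace ℤ (𝓞 K) x) :
    ∃ c, c * g = 3 ∧ c * discr K = g * (Algebra.trace ℤ (𝓞 K) (b 0 * b 0) *
      Algebra.trace ℤ (𝓞 K) (b 1 * b 1) - Algebra.trace ℤ (𝓞 K) (b 0 * b 1) ^ 2) := by
  have hr : finrank ℤ (𝓞 K) = 3 := by rw [RingOfIntegers.rank, hdegK]
  obtain ⟨T, hT⟩ : ∃ T, T = Algebra.trace ℤ (𝓞 K) := ⟨_, rfl⟩
  let B := Basis.mkFinCons w b (by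
    intro c x hx h
    have h1 := congrArg (Algebra.trace ℤ (𝓞 K)) h
    rw [LinearMap.mem_ker] at hx
    simp only [map_add, map_smul, hx, hw, smul_eq_mul, add_zero, map_zero] at h1
    exact (mul_eq_zero.1 h1).resolve_right hg) (by
    intro z
    obtain ⟨c, hc⟩ := hall z
    refine ⟨-c, ?_⟩
    rw [LinearMap.mem_ker]
    simp only [map_add, map_smul, hw, hc, smul_eq_mul]; ring)
  have hB : ⇑B = Fin.cons w ((↑) ∘ b) := Basis.coe_mkFinCons _ _ _ _
  have hB0 : B 0 = w := by rw [hB]; rfl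
  have hB1 : B 1 = b 0 := by rw [hB]; rfl
  have hB2 : B 2 = b 1 := by rw [hB]; rfl
  have h1 := B.sum_repr 1
  rw [Fin.sum_univ_three, hB0, hB1, hB2] at h1
  generalize B.repr 1 0 = γ at h1
  generalize B.repr 1 1 = α at h1
  generalize B.repr 1 2 = β at h1
  have hu : Algebra.trace ℤ (𝓞 K) (b 0) = 0 := (b 0).2
  have hv : Algebra.trace ℤ (𝓞 K) (b 1) = 0 := (b 1).2
  have ht1 : Algebra.trace ℤ (𝓞 K) 1 = 3 := by
    have := Algebra.trace_algebraMap (R := ℤ) (S := 𝓞 K) 1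
    rw [hr] at this; simpa using this
  have hdisc : discr K = (Algebra.traceMatrix ℤ B).det := by
    rw [← discr_eq_discr K B, Algebra.discr_def]
  rw [Matrix.det_fin_three] at hdisc
  simp only [Algebra.traceMatrix_apply, Algebra.traceForm_apply, hB0, hB1, hB2] at hdisc
  have E : ∀ y, γ * Algebra.trace ℤ (𝓞 K) (w * y) + α * Algebra.trace ℤ (𝓞 K) (b 0 * y) +
      β * Algebra.trace ℤ (𝓞 K) (b 1 * y) = Algebra.trace ℤ (𝓞 K) y := by
    intro y
    conv_rhs => rw [← one_mul y, ← h1]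
    simp only [add_mul, smul_mul_assoc, map_add, map_smul, smul_eq_mul]
  have E1 := E 1
  have Ew := E w
  have Eu := E (b 0)
  have Ev := E (b 1)
  simp only [mul_one] at E1
  rw [hw, hu, hv, ht1] at E1
  rw [hw] at Ew
  rw [hu] at Eu
  rw [hv] at Ev
  refine ⟨γ, by linarith, ?_⟩
  rw [mul_comm (b 0 : 𝓞 K) w, mul_comm (b 1 : 𝓞 K) w] at *
  rw [mul_comm (b 1 : 𝓞 K) (b 0)] at *
  generalize Algebra.trace ℤ (𝓞 K) (w * w) = a11 at *
  generalize Algebra.trace ℤ (𝓞 K) (w * (b 0)) = a12 at *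
  generalize Algebra.trace ℤ (𝓞 K) (w * (b 1)) = a13 at *
  generalize Algebra.trace ℤ (𝓞 K) (b 0 * (b 0)) = a22 at *
  generalize Algebra.trace ℤ (𝓞 K) (b 0 * (b 1)) = a23 at *
  generalize Algebra.trace ℤ (𝓞 K) (b 1 * (b 1)) = a33 at *
  rw [hdisc]
  linear_combination (a22 * a33 - a23 ^ 2) * Ew + (a13 * a23 - a12 * a33) * Eu
    + (a12 * a23 - a13 * a22) * Ev

open NumberField Module in
lemma gram {K : Type*} [Field K] [NumberField K] (hdegK : Module.finrank ℚ K = 3)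
    (hf : IsFundamentalDiscriminant (discr K))
    (b : Basis (Fin 2) ℤ (LinearMap.ker (Algebra.trace ℤ (𝓞 K)))) :
    Algebra.trace ℤ (𝓞 K) (b 0 * b 0) *
      Algebra.trace ℤ (𝓞 K) (b 1 * b 1) - Algebra.trace ℤ (𝓞 K) (b 0 * b 1) ^ 2 = 3 * discr K := by
  have hr : finrank ℤ (𝓞 K) = 3 := by rw [RingOfIntegers.rank, hdegK]
  have ht1 : Algebra.trace ℤ (𝓞 K) 1 = 3 := by
    have := Algebra.trace_algebraMap (R := ℤ) (S := 𝓞 K) 1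
    rw [hr] at this; simpa using this
  by_cases h : ∀ x, (3 : ℤ) ∣ Algebra.trace ℤ (𝓞 K) x
  · exfalso
    obtain ⟨c, hc, hcd⟩ := gram_aux hdegK b 1 3 (by norm_num) ht1 h
    have : c = 1 := by omega
    subst this
    obtain ⟨x, hx⟩ := h (b 0 * b 0)
    obtain ⟨y, hy⟩ := h (b 0 * b 1)
    obtain ⟨z, hz⟩ := h (b 1 * b 1)
    rw [hx, hy, hz] at hcd
    exact nine_not_dvd hf ⟨3 * (x * z - y ^ 2), by linarith⟩
  · push Not at h
    obtain ⟨x, hx⟩ := h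
    obtain ⟨s, t, hst⟩ := (cop_or (p := Algebra.trace ℤ (𝓞 K) x) Int.prime_three).resolve_right hx
    obtain ⟨c, hc, hcd⟩ := gram_aux hdegK b (s • 1 + t • x) 1 (by norm_num)
      (by simp only [map_add, map_smul, ht1, smul_eq_mul]; exact hst) (fun _ => one_dvd _)
    rw [mul_one] at hc
    subst hc
    linarith

open NumberField Module in
lemma ker_basis {K : Type*} [Field K] [NumberField K] (hdegK : Module.finrank ℚ K = 3) :
    Nonempty (Basis (Fin 2) ℤ (LinearMap.ker (Algebra.trace ℤ (𝓞 K)))) := by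
  have hr : finrank ℤ (𝓞 K) = 3 := by rw [RingOfIntegers.rank, hdegK]
  have ht1 : Algebra.trace ℤ (𝓞 K) 1 = 3 := by
    have := Algebra.trace_algebraMap (R := ℤ) (S := 𝓞 K) 1
    rw [hr] at this; simpa using this
  have h1 := Submodule.finrank_quotient_add_finrank (LinearMap.ker (Algebra.trace ℤ (𝓞 K)))
  rw [(LinearMap.quotKerEquivRange (Algebra.trace ℤ (𝓞 K))).finrank_eq] at h1
  have h2 : finrank ℤ (LinearMap.range (Algebra.trace ℤ (𝓞 K))) = 1 := by
    have hle := Submodule.finrank_le (LinearMap.range (Algebra.trace ℤ (𝓞 K)))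
    rw [finrank_self] at hle
    have hne : finrank ℤ (LinearMap.range (Algebra.trace ℤ (𝓞 K))) ≠ 0 := by
      intro h0
      rw [Submodule.finrank_eq_zero] at h0
      have : (3 : ℤ) ∈ LinearMap.range (Algebra.trace ℤ (𝓞 K)) := ⟨1, ht1⟩
      rw [h0] at this
      simp at this
    omega
  exact ⟨finBasisOfFinrankEq _ _ (by omega)⟩

open NumberField Module in
lemma field_data (K : Type*) [Field K] [NumberField K]
    (hdegK : Module.finrank ℚ K = 3)
    (htrK : ∀ (φ : K →+* ℂ) (x : K), (φ x).im = 0)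
    (d : ℤ) (hfund : IsFundamentalDiscriminant d) (hdK : NumberField.discr K = d) :
    ∃ (A B C : ℤ) (N I : ℤ → ℤ → ℤ) (z w : ℂ) (u : K),
      12 < d ∧ 0 < A ∧ 0 ≤ B ∧ B ≤ A ∧ A ≤ C ∧ 4 * A * C - B ^ 2 = 3 * d ∧
      (∀ m n : ℤ, (m * z + n * w) ^ 3 = ⟨27 * N m n / 2, 3 * (√3 * √d) * I m n / 2⟩) ∧
      (∀ m n : ℤ, Complex.normSq (m * z + n * w) = 3 * qv A B C m n) ∧
      u ^ 3 - A * u - N 1 0 = 0 ∧ u ∉ Set.range (algebraMap ℚ K) ∧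
      ∀ k : ℤ, Nat.card {x : NumberField.RingOfIntegers K //
          Algebra.trace ℚ K (x : K) = 0 ∧ Algebra.trace ℚ K ((x : K) ^ 2) = ((2 * k : ℤ) : ℚ)} =
        Nat.card {p : ℤ × ℤ // qv A B C p.1 p.2 = k} := by
  obtain ⟨ρ, hT, hN⟩ := real_embeddings K hdegK htrK
  obtain ⟨b₀⟩ := ker_basis hdegK
  have hTi : ∀ x : 𝓞 K, ((Algebra.trace ℤ (𝓞 K) x : ℤ) : ℝ) = ρ 0 x + ρ 1 x + ρ 2 x := by
    intro x; rw [← hT, ← Algebra.coe_trace_int]; simp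
  have hNi : ∀ x : 𝓞 K, ((Algebra.norm ℤ x : ℤ) : ℝ) = ρ 0 x * ρ 1 x * ρ 2 x := by
    intro x; rw [← hN, ← Algebra.coe_norm_int]; simp
  let f : LinearMap.ker (Algebra.trace ℤ (𝓞 K)) →ₗ[ℤ] LinearMap.ker (Algebra.trace ℤ (𝓞 K)) →ₗ[ℤ] ℤ :=
    (Algebra.traceForm ℤ (𝓞 K)).domRestrict₁₂ _ _
  have hfa : ∀ x y, f x y = Algebra.trace ℤ (𝓞 K) (x * y) := fun x y => rfl
  have hpos : ∀ x, x ≠ 0 → 0 < f x x := by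
    intro x hx
    rw [hfa]
    have h := hTi (x * x)
    have h0 : ρ 0 (x : 𝓞 K) ≠ 0 := by
      rw [map_ne_zero]
      simpa using hx
    have : (0 : ℝ) < ((Algebra.trace ℤ (𝓞 K) (x * x : 𝓞 K) : ℤ) : ℝ) := by
      rw [h]; simp only [map_mul]
      have := mul_self_pos.2 h0
      nlinarith [mul_self_nonneg (ρ 1 (x : 𝓞 K)), mul_self_nonneg (ρ 2 (x : 𝓞 K))]
    exact_mod_cast this
  obtain ⟨b, hb1, hb2, hb3⟩ := reduce f (fun x y => by rw [hfa, hfa, mul_comm]) hpos b₀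
  have hgram := gram hdegK (by rw [hdK]; exact hfund) b
  have hA0 := hpos (b 0) (b.ne_zero 0)
  rw [hdK] at hgram
  simp only [hfa] at hb1 hb2 hb3 hA0
  obtain ⟨A, hA⟩ := trace_sq_even hdegK (b 0) (b 0).2
  obtain ⟨C, hC⟩ := trace_sq_even hdegK (b 1) (b 1).2
  obtain ⟨B, hB⟩ : ∃ B, Algebra.trace ℤ (𝓞 K) (b 0 * b 1) = B := ⟨_, rfl⟩
  rw [hA, hC, hB] at hgram
  rw [hB] at hb1
  rw [hA, hB] at hb2
  rw [hA, hC] at hb3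
  rw [hA] at hA0
  have hd : 12 < d := by
    have h1 := discr_gt hdegK htrK
    rw [hdK] at h1
    have h2 : 0 < d := by nlinarith
    rwa [abs_of_pos h2] at h1
  obtain ⟨I, hI⟩ := index_form hdegK ρ hT (by omega) hdK
  let X : ℤ → ℤ → 𝓞 K := fun m n => m • (b 0 : 𝓞 K) + n • (b 1 : 𝓞 K)
  have hX0 : ∀ m n, Algebra.trace ℤ (𝓞 K) (X m n) = 0 := by
    intro m n
    have hu : Algebra.trace ℤ (𝓞 K) (b 0) = 0 := (b 0).2
    have hv : Algebra.trace ℤ (𝓞 K) (b 1) = 0 := (b 1).2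
    simp only [X, map_add, map_smul, hu, hv, smul_zero, add_zero]
  have hXX : ∀ m n, Algebra.trace ℤ (𝓞 K) (X m n * X m n) = 2 * qv A B C m n := by
    intro m n
    simp only [X, add_mul, mul_add, smul_mul_assoc, mul_smul_comm, map_add, map_smul, smul_eq_mul,
      mul_comm (b 1 : 𝓞 K) (b 0), hA, hB, hC, qv]
    ring
  have hρX : ∀ i m n, ρ i (X m n : 𝓞 K) = m * ρ i (b 0 : 𝓞 K) + n * ρ i (b 1 : 𝓞 K) := by
    intro i m n
    simp [X]
  have e1 : ∀ m n, ρ 0 (X m n : 𝓞 K) + ρ 1 (X m n : 𝓞 K) + ρ 2 (X m n : 𝓞 K) = 0 := by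
    intro m n; rw [← hTi, hX0]; simp
  have e2 : ∀ m n, ρ 0 (X m n : 𝓞 K) ^ 2 + ρ 1 (X m n : 𝓞 K) ^ 2 + ρ 2 (X m n : 𝓞 K) ^ 2
      = 2 * qv A B C m n := by
    intro m n
    have := hTi (X m n * X m n)
    rw [hXX] at this
    push_cast [map_mul] at this
    rw [this]; ring
  have s3 : √3 ^ 2 = (3 : ℝ) := Real.sq_sqrt (by norm_num)
  let Lf : 𝓞 K → ℂ := fun x => ⟨ρ 0 x - (ρ 1 x + ρ 2 x) / 2, √3 / 2 * (ρ 1 x - ρ 2 x)⟩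
  have hL : ∀ m n : ℤ, (m : ℂ) * Lf (b 0) + n * Lf (b 1) = Lf (X m n) := by
    intro m n
    apply Complex.ext
    · simp only [Lf, Complex.add_re, Complex.mul_re, Complex.intCast_re, Complex.intCast_im, hρX]
      ring
    · simp only [Lf, Complex.add_im, Complex.mul_im, Complex.intCast_re, Complex.intCast_im, hρX]
      ring
  refine ⟨A, B, C, fun m n => Algebra.norm ℤ (X m n), fun m n => I (X m n), Lf (b 0), Lf (b 1),
    (X 1 0 : 𝓞 K), hd, by omega, hb1, by omega, by omega, by linarith, ?_, ?_, ?_, ?_, ?_⟩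
  · intro m n
    rw [hL]
    have h1 := e1 m n
    have h3 := hNi (X m n)
    have h4 := hI (X m n)
    apply Complex.ext
    · simp only [h3, Lf, pow_succ, pow_zero, one_mul, Complex.mul_re, Complex.mul_im]
      generalize ρ 0 (X m n : 𝓞 K) = x at *
      generalize ρ 1 (X m n : 𝓞 K) = y at *
      generalize ρ 2 (X m n : 𝓞 K) = t at *
      obtain rfl : x = -y - t := by linarith
      linear_combination (-(3 / 4) * (-y - t - (y + t) / 2) * (y - t) ^ 2) * s3
    · simp only [Lf, pow_succ, pow_zero, one_mul, Complex.mul_re, Complex.mul_im]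
      have h5 : 3 * (√3 * √(d : ℝ)) * (I (X m n) : ℝ) / 2 = 3 * √3 / 2 * (√(d : ℝ) * I (X m n)) := by
        ring
      rw [h5, ← h4]
      generalize ρ 0 (X m n : 𝓞 K) = x at *
      generalize ρ 1 (X m n : 𝓞 K) = y at *
      generalize ρ 2 (X m n : 𝓞 K) = t at *
      obtain rfl : x = -y - t := by linarith
      linear_combination (-(1 / 8) * √3 * (y - t) ^ 3) * s3
  · intro m n
    rw [hL, Complex.normSq_apply]
    have h1 := e1 m n
    have h2 := e2 m n
    simp only [Lf]
    generalize ρ 0 (X m n : 𝓞 K) = x at *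
    generalize ρ 1 (X m n : 𝓞 K) = y at *
    generalize ρ 2 (X m n : 𝓞 K) = t at *
    obtain rfl : x = -y - t := by linarith
    linear_combination (1 / 4 * (y - t) ^ 2) * s3 + 3 / 2 * h2
  · apply (ρ 0).injective
    have h1 := e1 1 0
    have h2 := e2 1 0
    have h3 := hNi (X 1 0)
    have hq : qv A B C 1 0 = A := by simp [qv]
    rw [hq] at h2
    simp only [map_sub, map_mul, map_pow, map_intCast, map_zero, h3]
    generalize ρ 0 (X 1 0 : 𝓞 K) = x at *
    generalize ρ 1 (X 1 0 : 𝓞 K) = y at *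
    generalize ρ 2 (X 1 0 : 𝓞 K) = t at *
    obtain rfl : x = -y - t := by linarith
    linear_combination ((-y - t) / 2) * h2
  · rintro ⟨q, hq⟩
    have h1 := e1 1 0
    rw [← hq] at h1
    simp only [eq_ratCast, map_ratCast] at h1
    have hq0 : (q : ℝ) = 0 := by linarith
    have hq1 : q = 0 := by exact_mod_cast hq0
    have h2 := e2 1 0
    rw [← hq, hq1] at h2
    simp [qv] at h2
    omega
  · intro k
    symm
    have hmem : ∀ m n, (Algebra.trace ℚ K (X m n : K) = 0 ∧
        Algebra.trace ℚ K ((X m n : K) ^ 2) = ((2 * k : ℤ) : ℚ)) ↔ qv A B C m n = k := by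
      intro m n
      have h2 : ((X m n : 𝓞 K) : K) ^ 2 = ((X m n * X m n : 𝓞 K) : K) := by
        rw [sq]; rfl
      rw [h2, ← Algebra.coe_trace_int, ← Algebra.coe_trace_int, hX0, hXX]
      constructor
      · rintro ⟨-, h⟩
        have : 2 * qv A B C m n = 2 * k := by exact_mod_cast h
        omega
      · rintro rfl
        exact ⟨by simp, rfl⟩
    have hcoe : ∀ m n, X m n = ((m • b 0 + n • b 1 : LinearMap.ker (Algebra.trace ℤ (𝓞 K))) : 𝓞 K) := by
      intro m n; simp [X]
    apply Nat.card_congr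
    refine Equiv.ofBijective (fun p => ⟨X p.1.1 p.1.2, (hmem _ _).2 p.2⟩) ⟨?_, ?_⟩
    · rintro ⟨⟨m, n⟩, h⟩ ⟨⟨m', n'⟩, h'⟩ heq
      simp only [Subtype.mk.injEq] at heq
      rw [hcoe, hcoe] at heq
      have h1 := Subtype.ext heq
      have h2 := congrArg (fun y => b.repr y 0) h1
      have h3 := congrArg (fun y => b.repr y 1) h1
      simp at h2 h3
      simp [h2, h3]
    · rintro ⟨x, hx1, hx2⟩
      have hx0 : Algebra.trace ℤ (𝓞 K) x = 0 := by
        rw [← Algebra.coe_trace_int] at hx1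
        exact_mod_cast hx1
      have h := b.sum_repr ⟨x, hx0⟩
      rw [Fin.sum_univ_two] at h
      have h' : X (b.repr ⟨x, hx0⟩ 0) (b.repr ⟨x, hx0⟩ 1) = x := by
        rw [hcoe, h]
      refine ⟨⟨(b.repr ⟨x, hx0⟩ 0, b.repr ⟨x, hx0⟩ 1), ?_⟩, ?_⟩
      · apply (hmem _ _).1
        simp only [h']
        exact ⟨hx1, hx2⟩
      · simp only [h']

open Polynomial IntermediateField in
lemma minpoly_cubic {K : Type*} [Field K] [NumberField K] (hdegK : Module.finrank ℚ K = 3)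
    {u : K} (hu : u ∉ Set.range (algebraMap ℚ K)) {a n : ℤ} (h : u ^ 3 - a * u - n = 0) :
    minpoly ℚ u = X ^ 3 - C (a : ℚ) * X - C (n : ℚ) ∧ ℚ⟮u⟯ = ⊤ := by
  have hIntegral : IsIntegral ℚ u := Algebra.IsIntegral.isIntegral u
  have hdvd : Module.finrank ℚ ℚ⟮u⟯ ∣ 3 := by
    rw [← hdegK]; exact ⟨_, (Module.finrank_mul_finrank ℚ ℚ⟮u⟯ K).symm⟩
  have h3 : Module.finrank ℚ ℚ⟮u⟯ = 3 := by
    rcases (Nat.dvd_prime Nat.prime_three).1 hdvd with h1 | h1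
    · rw [IntermediateField.finrank_eq_one_iff, adjoin_simple_eq_bot_iff, mem_bot] at h1
      exact absurd h1 hu
    · exact h1
  constructor
  · have hm : (X ^ 3 - C (a : ℚ) * X - C (n : ℚ)).Monic := by monicity!
    have hdeg : (X ^ 3 - C (a : ℚ) * X - C (n : ℚ)).natDegree = 3 := by compute_degree!
    have hd : minpoly ℚ u ∣ X ^ 3 - C (a : ℚ) * X - C (n : ℚ) := by
      apply minpoly.dvd
      simpa using h
    refine (eq_of_monic_of_dvd_of_natDegree_le (minpoly.monic hIntegral) hm hd ?_).symm
    rw [hdeg, ← adjoin.finrank hIntegral, h3]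
  · apply IntermediateField.eq_of_le_of_finrank_eq le_top
    rw [h3, finrank_top', hdegK]

open Polynomial IntermediateField in
lemma iso_of_roots {K L : Type*} [Field K] [NumberField K] [Field L] [NumberField L]
    (hdegK : Module.finrank ℚ K = 3) (hdegL : Module.finrank ℚ L = 3)
    {u : K} (hu : u ∉ Set.range (algebraMap ℚ K)) {v : L} (hv : v ∉ Set.range (algebraMap ℚ L))
    {a n : ℤ} (h : u ^ 3 - a * u - n = 0) (h' : v ^ 3 - a * v - n = 0) : Nonempty (K ≃+* L) := by
  obtain ⟨h1, h2⟩ := minpoly_cubic hdegK hu h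
  obtain ⟨h3, h4⟩ := minpoly_cubic hdegL hv h'
  have hintu : IsIntegral ℚ u := Algebra.IsIntegral.isIntegral u
  have hintv : IsIntegral ℚ v := Algebra.IsIntegral.isIntegral v
  let e1 : AdjoinRoot (minpoly ℚ u) ≃ₐ[ℚ] K :=
    (adjoinRootEquivAdjoin ℚ hintu).trans ((equivOfEq h2).trans topEquiv)
  let e2 : AdjoinRoot (minpoly ℚ v) ≃ₐ[ℚ] L :=
    (adjoinRootEquivAdjoin ℚ hintv).trans ((equivOfEq h4).trans topEquiv)
  have hp : minpoly ℚ u = minpoly ℚ v := by rw [h1, h3]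
  rw [← hp] at e2
  exact ⟨(e1.symm.trans e2).toRingEquiv⟩

/-- Two totally real cubic fields of the same fundamental discriminant whose trace-zero
integral trace forms represent every integer the same number of times are isomorphic. -/
theorem isomorphic_of_same_representation_numbers
    (K L : Type*) [Field K] [NumberField K] [Field L] [NumberField L]
    (hdegK : Module.finrank ℚ K = 3) (hdegL : Module.finrank ℚ L = 3)
    (htrK : ∀ (φ : K →+* ℂ) (x : K), (φ x).im = 0)
    (htrL : ∀ (φ : L →+* ℂ) (x : L), (φ x).im = 0)
    (d : ℤ) (hfund : IsFundamentalDiscriminant d)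
    (hdK : NumberField.discr K = d) (hdL : NumberField.discr L = d)
    (hcount : ∀ n : ℤ,
      Nat.card {x : NumberField.RingOfIntegers K //
          Algebra.trace ℚ K (x : K) = 0 ∧ Algebra.trace ℚ K ((x : K) ^ 2) = (n : ℚ)} =
        Nat.card {y : NumberField.RingOfIntegers L //
          Algebra.trace ℚ L (y : L) = 0 ∧ Algebra.trace ℚ L ((y : L) ^ 2) = (n : ℚ)}) :
    Nonempty (K ≃+* L) := by

  obtain ⟨A, B, C, N, I, z, w, u, hd, hA, hB, hBA, hAC, hD, h3, hn, hu, hur, hc⟩ :=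
    field_data K hdegK htrK d hfund hdK
  obtain ⟨A', B', C', N', I', z', w', u', -, hA', hB', hBA', hAC', hD', h3', hn', hu', hur', hc'⟩ :=
    field_data L hdegL htrL d hfund hdL
  obtain ⟨rfl, rfl, rfl⟩ := forms_eq hA hB hBA hAC hA' hB' hBA' hAC' (hD.trans hD'.symm)
    (fun k => by rw [← hc, ← hc']; exact hcount (2 * k))
  rcases combine hfund hd hA hD N I N' I' z w z' w' h3 h3' hn hn' with h | h
  · rw [h] at hu'
    exact iso_of_roots hdegK hdegL hur hur' hu hu'
  · rw [h] at hu'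
    refine iso_of_roots hdegK hdegL hur (v := -u') ?_ hu ?_
    · rintro ⟨q, hq⟩
      exact hur' ⟨-q, by rw [map_neg, hq, neg_neg]⟩
    · push_cast at hu'
      linear_combination -hu'
end
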